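/- arXiv:1009.2541 — 3 statements merged into one kernel-verified Lean document; each statement's English description precedes it below -/
import Mathlib

section
/- For every n ≥ 1, the map ψ_n : M_n(ℂ) → B(ℓ²(ℕ)) defined by ψ_n(Y) = V_n Y V_n* + y_{1,1} Q_n is unital and completely positive, and its range is contained in S₀ (i.e., ψ_n(M_n(ℂ)) ⊆ S₀). -/
noncomputable section

open scoped ComplexOrder InnerProductSpace

/-- The Hilbert space ℓ²(ℕ) of square-summable complex sequences. -/
abbrev Hs : Type := lp (fun _ : ℕ => ℂ) 2

/-- The standard orthonormal basis vectors of ℓ²(ℕ) (indexed from 0). -/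
def e (i : ℕ) : Hs := lp.single 2 i 1

/-- The matrix unit `E i j : x ↦ ⟨x, e j⟩ e i`. -/
def E (i j : ℕ) : Hs →L[ℂ] Hs := (innerSL ℂ (e j)).smulRight (e i)

/-- `K₀`: the norm-closed linear span of the matrix units `E i j`, `(i,j) ≠ (0,0)`. -/
def K0 : Submodule ℂ (Hs →L[ℂ] Hs) :=
  (Submodule.span ℂ {T | ∃ i j : ℕ, (i, j) ≠ (0, 0) ∧ T = E i j}).topologicalClosure

/-- The operator system `S₀` spanned by `K₀` and the identity operator. -/
def S0 : Submodule ℂ (Hs →L[ℂ] Hs) := Submodule.span ℂ {(1 : Hs →L[ℂ] Hs)} ⊔ K0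

lemma one_mem_S0 : (1 : Hs →L[ℂ] Hs) ∈ S0 :=
  Submodule.mem_sup_left (Submodule.mem_span_singleton_self _)

/-- The matrix entry `X_{ij} = ⟨X e_j, e_i⟩` of a bounded operator on ℓ²(ℕ). -/
def entry (X : Hs →L[ℂ] Hs) (i j : ℕ) : ℂ := ⟪e i, X (e j)⟫_ℂ

/-- `φ_{n+1}(X) = V_{n+1}* X V_{n+1}`, the upper-left (n+1)×(n+1) corner of `X`. -/
def phi (n : ℕ) (X : Hs →L[ℂ] Hs) : Matrix (Fin (n+1)) (Fin (n+1)) ℂ :=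
  fun i j => entry X i j

/-- `Q_{n+1}`: the projection onto the orthocomplement of the span of `e 0, …, e n`. -/
def Qop (n : ℕ) : Hs →L[ℂ] Hs := 1 - ∑ i : Fin (n+1), E i i

/-- `ψ_{n+1}(Y) = V_{n+1} Y V_{n+1}* + y₀₀ Q_{n+1}`. -/
def psi (n : ℕ) (Y : Matrix (Fin (n+1)) (Fin (n+1)) ℂ) : Hs →L[ℂ] Hs :=
  (∑ i : Fin (n+1), ∑ j : Fin (n+1), Y i j • E i j) + Y 0 0 • Qop n

/-- Positivity in the C*-algebra of m×m matrices over a star ring: `M = N* N`. -/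
def MatPos {A : Type*} [Ring A] [StarRing A] {m : ℕ}
    (M : Matrix (Fin m) (Fin m) A) : Prop :=
  ∃ N : Matrix (Fin m) (Fin m) A, M = N.conjTranspose * N

/-- Complete positivity of a map between star rings: every matrix amplification
preserves positivity. -/
def IsCPfun {A B : Type*} [Ring A] [StarRing A] [Ring B] [StarRing B]
    (θ : A → B) : Prop :=
  ∀ (m : ℕ) (M : Matrix (Fin m) (Fin m) A), MatPos M → MatPos (M.map θ)

/-!
The map `τ Y = V Y V*` is a non-unital `*`-homomorphism, because the operators `E i j` obey the
multiplication and adjoint rules of the elementary matrices. Hence `τ 1` is a projection, and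
`Q = 1 - τ 1` is its complement. In `ψ Y = τ Y + y₀₀ Q` the second summand is the diagonal entry
`Y ↦ y₀₀` followed by the `*`-homomorphism `c ↦ c Q`, and the diagonal entry is completely positive
because `(X* Y)₀₀ = ∑ₗ conj(xₗ₀) yₗ₀`. For the range, `ψ Y = y₀₀ 1 + τ (Y - y₀₀ 1)`, where the
`(0,0)` entry of `Y - y₀₀ 1` vanishes.
-/

section CompletelyPositive

variable {A B C : Type*}

lemma exists_star_mul_self_add_star_mul_self_eq [CStarAlgebra A] [PartialOrder A]
    [StarOrderedRing A] (a b : A) : ∃ c, star a * a + star b * b = star c * c :=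
  CStarAlgebra.nonneg_iff_eq_star_mul_self.mp
    (add_nonneg (star_mul_self_nonneg a) (star_mul_self_nonneg b))

lemma MatPos.add [CStarAlgebra A] [PartialOrder A] [StarOrderedRing A] {m : ℕ}
    {M₁ M₂ : Matrix (Fin m) (Fin m) A} (h₁ : MatPos M₁) (h₂ : MatPos M₂) : MatPos (M₁ + M₂) := by
  obtain ⟨N₁, rfl⟩ := h₁
  obtain ⟨N₂, rfl⟩ := h₂
  -- The square root of the sum exists because matrices over a C⋆-algebra form a C⋆-algebra.
  obtain ⟨N, hN⟩ := exists_star_mul_self_add_star_mul_self_eq (CStarMatrix.ofMatrix N₁)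
    (CStarMatrix.ofMatrix N₂)
  exact ⟨CStarMatrix.ofMatrix.symm N, hN⟩

lemma MatPos.sum [CStarAlgebra A] [PartialOrder A] [StarOrderedRing A] {m : ℕ} {ι : Type*}
    (s : Finset ι) {M : ι → Matrix (Fin m) (Fin m) A} (h : ∀ k ∈ s, MatPos (M k)) :
    MatPos (∑ k ∈ s, M k) :=
  Finset.sum_induction M MatPos (fun _ _ => MatPos.add) ⟨0, by simp⟩ h

lemma IsCPfun.comp [Ring A] [StarRing A] [Ring B] [StarRing B] [Ring C] [StarRing C]
    {η : B → C} {θ : A → B} (hη : IsCPfun η) (hθ : IsCPfun θ) : IsCPfun (η ∘ θ) :=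
  fun m M hM => Matrix.map_map (M := M) ▸ hη m _ (hθ m M hM)

lemma IsCPfun.add [Ring A] [StarRing A] [CStarAlgebra B] [PartialOrder B] [StarOrderedRing B]
    {θ₁ θ₂ : A → B} (h₁ : IsCPfun θ₁) (h₂ : IsCPfun θ₂) : IsCPfun (θ₁ + θ₂) :=
  fun m M hM => (h₁ m M hM).add (h₂ m M hM)

lemma isCPfun_of_starHom [Ring A] [StarRing A] [Ring B] [StarRing B] {F : Type*} [FunLike F A B]
    [NonUnitalRingHomClass F A B] [StarHomClass F A B] (f : F) : IsCPfun f := by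
  rintro m _ ⟨N, rfl⟩
  exact ⟨N.map f, by rw [Matrix.map_mul, Matrix.conjTranspose_map f (map_star f)]⟩

lemma isCPfun_diag_apply [CStarAlgebra A] [PartialOrder A] [StarOrderedRing A] {ι : Type*}
    [Fintype ι] [DecidableEq ι] (k : ι) : IsCPfun fun Y : Matrix ι ι A => Y k k := by
  rintro m _ ⟨N, rfl⟩
  have map_eq_sum : (N.conjTranspose * N).map (fun Y => Y k k) =
      ∑ l, (N.map fun Y => Y l k).conjTranspose * N.map fun Y => Y l k := by
    ext a b
    simp only [Matrix.map_apply, Matrix.mul_apply, Matrix.sum_apply, Matrix.conjTranspose_apply,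
      Matrix.star_apply]
    exact Finset.sum_comm
  rw [map_eq_sum]
  exact MatPos.sum _ fun l _ => ⟨_, rfl⟩

end CompletelyPositive

section StarHom

/-- A system of matrix units: a family satisfying the multiplication and adjoint rules of the
elementary matrices. The diagonal units are not required to sum to `1`. -/
structure IsMatrixUnits {ι B : Type*} [DecidableEq ι] [Mul B] [Zero B] [Star B]
    (u : ι → ι → B) : Prop where
  mul_eq : ∀ i j k l, u i j * u k l = if j = k then u i l else 0
  star_eq : ∀ i j, star (u i j) = u j i

variable {R B ι : Type*} [CommSemiring R] [NonUnitalSemiring B] [StarRing B] [Module R B]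
  [IsScalarTower R B B] [SMulCommClass R B B] [Fintype ι] [DecidableEq ι] {u : ι → ι → B}

lemma IsMatrixUnits.sum_smul_mul_sum_smul (hu : IsMatrixUnits u) (Y Z : Matrix ι ι R) :
    (∑ i, ∑ j, Y i j • u i j) * (∑ i, ∑ j, Z i j • u i j) = ∑ i, ∑ j, (Y * Z) i j • u i j := by
  have mul_row (i j : ι) : Y i j • u i j * (∑ k, ∑ l, Z k l • u k l) =
      ∑ l, (Y i j * Z j l) • u i l := by
    simp only [Finset.mul_sum, smul_mul_smul_comm, hu.mul_eq, smul_ite, smul_zero]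
    rw [Finset.sum_comm]
    simp only [Finset.sum_ite_eq, Finset.mem_univ, if_true]
  simp only [Finset.sum_mul, mul_row, Matrix.mul_apply, Finset.sum_smul]
  exact Finset.sum_congr rfl fun i _ => Finset.sum_comm

variable [StarRing R] [StarModule R B]

/-- The `*`-homomorphism from the matrix algebra sending the elementary matrices to a given system
of matrix units. -/
def IsMatrixUnits.starHom (hu : IsMatrixUnits u) : Matrix ι ι R →⋆ₙₐ[R] B where
  toFun Y := ∑ i, ∑ j, Y i j • u i j
  map_smul' c Y := by simp [Finset.smul_sum, mul_smul]
  map_zero' := by simp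
  map_add' Y Z := by simp [add_smul, Finset.sum_add_distrib]
  map_mul' Y Z := (hu.sum_smul_mul_sum_smul Y Z).symm
  map_star' Y := by
    simp only [star_sum, star_smul, hu.star_eq, Matrix.star_apply]
    exact Finset.sum_comm

lemma IsMatrixUnits.starHom_apply (hu : IsMatrixUnits u) (Y : Matrix ι ι R) :
    hu.starHom Y = ∑ i, ∑ j, Y i j • u i j := rfl

lemma IsMatrixUnits.starHom_one (hu : IsMatrixUnits u) :
    hu.starHom (1 : Matrix ι ι R) = ∑ i, u i i := by
  simp [starHom_apply, Matrix.one_apply]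

/-- The `*`-homomorphism `c ↦ c • q` from the scalars attached to a projection `q`. It is not unital
unless `q = 1`. -/
def smulStarProjection {q : B} (hq : IsStarProjection q) : R →⋆ₙₐ[R] B where
  toFun c := c • q
  map_smul' c d := smul_assoc c d q
  map_zero' := zero_smul R q
  map_add' c d := add_smul c d q
  map_mul' c d := by rw [smul_mul_smul_comm, hq.isIdempotentElem.eq]
  map_star' c := by rw [star_smul, hq.isSelfAdjoint.star_eq]

end StarHom

lemma isCPfun_starHom_add_smul_one_sub {ι B : Type*} [Fintype ι] [DecidableEq ι] [CStarAlgebra B]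
    [PartialOrder B] [StarOrderedRing B] (τ : Matrix ι ι ℂ →⋆ₙₐ[ℂ] B) (k : ι) :
    IsCPfun fun Y => τ Y + Y k k • (1 - τ 1) := by
  have isStarProjection_compl : IsStarProjection (1 - τ 1) :=
    ((IsStarProjection.one (R := Matrix ι ι ℂ)).map τ).one_sub
  exact (isCPfun_of_starHom τ).add <|
    (isCPfun_of_starHom (smulStarProjection (R := ℂ) isStarProjection_compl)).comp
      (isCPfun_diag_apply k)

lemma isMatrixUnits_rankOne {𝕜 H ι : Type*} [RCLike 𝕜] [NormedAddCommGroup H]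
    [InnerProductSpace 𝕜 H] [CompleteSpace H] [DecidableEq ι] {v : ι → H} (hv : Orthonormal 𝕜 v) :
    IsMatrixUnits fun i j => InnerProductSpace.rankOne 𝕜 (v i) (v j) where
  mul_eq i j k l := by
    rw [ContinuousLinearMap.mul_def, InnerProductSpace.rankOne_comp_rankOne,
      orthonormal_iff_ite.mp hv, ite_smul, one_smul, zero_smul]
  star_eq i j := InnerProductSpace.adjoint_rankOne (v i) (v j)

lemma orthonormal_e : Orthonormal ℂ e := by
  rw [orthonormal_iff_ite]
  intro i j
  rw [e, e, lp.inner_single_left, lp.single_apply, Pi.single_apply]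
  simp

lemma isMatrixUnits_E (n : ℕ) : IsMatrixUnits fun i j : Fin n => E i j :=
  isMatrixUnits_rankOne (orthonormal_e.comp _ Fin.val_injective)

/-- The corner embedding `Y ↦ V_{n+1} Y V_{n+1}*`. -/
def corner (n : ℕ) : Matrix (Fin (n + 1)) (Fin (n + 1)) ℂ →⋆ₙₐ[ℂ] Hs →L[ℂ] Hs :=
  (isMatrixUnits_E (n + 1)).starHom

lemma psi_eq_corner_add (n : ℕ) (Y : Matrix (Fin (n + 1)) (Fin (n + 1)) ℂ) :
    psi n Y = corner n Y + Y 0 0 • (1 - corner n 1) := by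
  rw [corner, IsMatrixUnits.starHom_one]
  rfl

lemma psi_eq_smul_one_add_corner (n : ℕ) (Y : Matrix (Fin (n + 1)) (Fin (n + 1)) ℂ) :
    psi n Y = Y 0 0 • 1 + corner n (Y - Y 0 0 • 1) := by
  rw [psi_eq_corner_add, map_sub, map_smul, smul_sub]
  abel

lemma E_mem_K0 {i j : ℕ} (hij : (i, j) ≠ (0, 0)) : E i j ∈ K0 :=
  Submodule.le_topologicalClosure _ (Submodule.subset_span ⟨i, j, hij, rfl⟩)

lemma corner_mem_K0 {n : ℕ} {Y : Matrix (Fin (n + 1)) (Fin (n + 1)) ℂ} (hY : Y 0 0 = 0) :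
    corner n Y ∈ K0 := by
  rw [corner, IsMatrixUnits.starHom_apply]
  refine K0.sum_mem fun i _ => K0.sum_mem fun j _ => ?_
  by_cases hij : i = 0 ∧ j = 0
  · obtain ⟨rfl, rfl⟩ := hij
    simp [hY]
  · exact K0.smul_mem _ (E_mem_K0 (by simpa using hij))

/-- for every `n ≥ 1` (here `n+1`), the map `ψ_{n+1} : M_{n+1}(ℂ) → B(ℓ²(ℕ))`
is unital and completely positive, and its range is contained in `S₀`. -/
theorem stmt_0 (n : ℕ) :
    psi n 1 = 1 ∧ IsCPfun (psi n) ∧ ∀ Y : Matrix (Fin (n+1)) (Fin (n+1)) ℂ, psi n Y ∈ S0 := by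
  refine ⟨?unital, ?completelyPositive, fun Y => ?range⟩
  case unital => rw [psi_eq_corner_add, Matrix.one_apply_eq, one_smul, add_sub_cancel]
  case completelyPositive =>
    rw [funext (psi_eq_corner_add n)]
    exact isCPfun_starHom_add_smul_one_sub (corner n) 0
  case range =>
    rw [psi_eq_smul_one_add_corner]
    exact S0.add_mem (S0.smul_mem _ one_mem_S0)
      (Submodule.mem_sup_right (corner_mem_K0 (by simp)))
end
end

section
/- The bidual S₀** is unitally order isomorphic to B(ℓ²(ℕ)): there is a linear bijection Φ : S₀** → B(ℓ²(ℕ)) that sends the canonical image of the identity I of S₀ to the identity operator and maps the positive cone of S₀** bijectively onto the cone of positive operators in B(ℓ²(ℕ)). -/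
noncomputable section

open scoped ComplexOrder InnerProductSpace

/-! Every bounded functional on the closed span `K₀` of the matrix units is a norm limit of
combinations of vector functionals `X ↦ ⟪x, X y⟫`. Indeed, for a projection `p` and a functional `f`
on a C⋆-algebra, `‖f (p ·)‖² + ‖f ((1 - p) ·)‖² ≤ ‖f‖²`, so a norm-preserving extension `f` to
`B(H)` of a functional on `K₀` is the limit of `f (pₛ ·)` for the coordinate projections `pₛ`, and
`f (pₛ ·)` is a finite sum of vector functionals. The vector state at the missing diagonal position
vanishes on `K₀`, which carries the density over to the span of `K₀` and `1`.

Hence `F` in the bidual is determined by the bounded form `(x, y) ↦ F (X ↦ ⟪x, X y⟫)`, that is, by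
an operator. Conversely, an operator `T` is the weak limit of the bounded net `pₛ T pₛ + ⟪x₀, T x₀⟫
(1 - pₛ)`, which lies in the operator system and is positive when `T` is; a weak-⋆ cluster point of
this net in the bidual is the preimage of `T`. -/

section

open Filter InnerProductSpace Topology
open ContinuousLinearMap (compL adjoint)

-- The normed structure on subspaces of `H →L[𝕜] H` is not synthesized at the default depth.
set_option maxSynthPendingDepth 3

lemma exists_mem_norm_sq_sub_lt_norm_apply_sq {𝕜 V : Type*} [RCLike 𝕜]
    [NormedAddCommGroup V] [NormedSpace 𝕜 V] {f : StrongDual 𝕜 V} {N : Submodule 𝕜 V}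
    (hf : ‖f.comp N.subtypeL‖ = ‖f‖) {ε : ℝ} (hε : 0 < ε) :
    ∃ x ∈ N, ‖x‖ ≤ 1 ∧ ‖f‖ ^ 2 - ε < ‖f x‖ ^ 2 := by
  by_cases hfε : ‖f‖ ^ 2 < ε
  · exact ⟨0, N.zero_mem, by simp, by simpa using hfε⟩
  have sqrt_lt : √(‖f‖ ^ 2 - ε) < ‖f.comp N.subtypeL‖ := by
    calc √(‖f‖ ^ 2 - ε) < √(‖f‖ ^ 2) :=
          Real.sqrt_lt_sqrt (sub_nonneg.2 (not_lt.1 hfε)) (sub_lt_self _ hε)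
      _ = ‖f.comp N.subtypeL‖ := by rw [Real.sqrt_sq (norm_nonneg f), hf]
  obtain ⟨x, hx, hfx⟩ := (f.comp N.subtypeL).exists_lt_apply_of_lt_opNorm sqrt_lt
  exact ⟨x, x.2, hx.le, Real.lt_sq_of_sqrt_lt hfx⟩

section CStarRing

variable {A : Type*} [NormedRing A] [StarRing A] [CStarRing A] {p : A}

lemma norm_mul_add_one_sub_mul_sq_le (hp : IsStarProjection p) (x y : A) :
    ‖p * x + (1 - p) * y‖ ^ 2 ≤ ‖x‖ ^ 2 + ‖y‖ ^ 2 := by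
  have norm_star_mul_mul_self_le {q : A} (hq : IsStarProjection q) (z : A) :
      ‖star z * (q * z)‖ ≤ ‖z‖ ^ 2 := by
    calc ‖star z * (q * z)‖ ≤ ‖star z‖ * (‖q‖ * ‖z‖) := norm_mul_le_of_le le_rfl (norm_mul_le _ _)
      _ ≤ ‖z‖ * (1 * ‖z‖) := by rw [norm_star]; gcongr; exact hq.norm_le
      _ = ‖z‖ ^ 2 := by ring
  have star_mul_self_eq : star (p * x + (1 - p) * y) * (p * x + (1 - p) * y) =
      star x * (p * x) + star y * ((1 - p) * y) := by
    have mul_mul_cancel {q r : A} (hqr : q * r = 0) (z w : A) : star z * q * (r * w) = 0 := by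
      rw [mul_assoc, ← mul_assoc q, hqr, zero_mul, mul_zero]
    have mul_mul_self {q : A} (hq : IsStarProjection q) (z : A) :
        star z * q * (q * z) = star z * (q * z) := by
      rw [mul_assoc, ← mul_assoc q, hq.isIdempotentElem.eq]
    rw [star_add, star_mul, star_mul, hp.isSelfAdjoint.star_eq, hp.one_sub.isSelfAdjoint.star_eq,
      add_mul, mul_add, mul_add, mul_mul_cancel hp.mul_one_sub_self,
      mul_mul_cancel hp.one_sub_mul_self, mul_mul_self hp, mul_mul_self hp.one_sub, add_zero,
      zero_add]
  calc ‖p * x + (1 - p) * y‖ ^ 2 = ‖star x * (p * x) + star y * ((1 - p) * y)‖ := by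
        rw [← star_mul_self_eq, CStarRing.norm_star_mul_self, sq]
    _ ≤ ‖x‖ ^ 2 + ‖y‖ ^ 2 := norm_add_le_of_le (norm_star_mul_mul_self_le hp x)
        (norm_star_mul_mul_self_le hp.one_sub y)

variable {𝕜 : Type*} [RCLike 𝕜] [NormedAlgebra 𝕜 A]

lemma norm_apply_mul_sq_add_norm_apply_one_sub_mul_sq_le (f : StrongDual 𝕜 A)
    (hp : IsStarProjection p) {x y : A} (hx : ‖x‖ ≤ 1) (hy : ‖y‖ ≤ 1) :
    ‖f (p * x)‖ ^ 2 + ‖f ((1 - p) * y)‖ ^ 2 ≤ ‖f‖ ^ 2 := by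
  set a := f (p * x)
  set b := f ((1 - p) * y)
  set s := ‖a‖ ^ 2 + ‖b‖ ^ 2 with hs
  have hs_nonneg : 0 ≤ s := by positivity
  -- Evaluating `f` at this combination gives exactly `s`, while its norm is at most `√s`.
  let z := p * (star a • x) + (1 - p) * (star b • y)
  have apply_z : f z = (s : 𝕜) := by
    simp only [z, mul_smul_comm, map_add, map_smul, smul_eq_mul, hs]
    push_cast
    rw [← RCLike.conj_mul, ← RCLike.conj_mul]
    rfl
  have norm_z : ‖z‖ ^ 2 ≤ s := by
    calc ‖z‖ ^ 2 ≤ ‖star a • x‖ ^ 2 + ‖star b • y‖ ^ 2 := norm_mul_add_one_sub_mul_sq_le hp _ _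
      _ = ‖a‖ ^ 2 * ‖x‖ ^ 2 + ‖b‖ ^ 2 * ‖y‖ ^ 2 := by simp only [norm_smul, norm_star, mul_pow]
      _ ≤ ‖a‖ ^ 2 * 1 ^ 2 + ‖b‖ ^ 2 * 1 ^ 2 := by gcongr
      _ = s := by rw [one_pow, mul_one, mul_one]
  have s_sq_le : s * s ≤ ‖f‖ ^ 2 * s := by
    calc s * s = ‖f z‖ ^ 2 := by
          rw [apply_z, RCLike.norm_ofReal, sq_abs, sq]
      _ ≤ (‖f‖ * ‖z‖) ^ 2 := by gcongr; exact f.le_opNorm z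
      _ ≤ ‖f‖ ^ 2 * s := by rw [mul_pow]; gcongr
  rcases hs_nonneg.eq_or_lt with h | h
  · rw [← h]; positivity
  · exact le_of_mul_le_mul_right s_sq_le h

lemma norm_apply_mul_sq_add_norm_sub_comp_mul_sq_le (f : StrongDual 𝕜 A)
    (hp : IsStarProjection p) {x : A} (hx : ‖x‖ ≤ 1) :
    ‖f (p * x)‖ ^ 2 + ‖f - f.comp (ContinuousLinearMap.mul 𝕜 A p)‖ ^ 2 ≤ ‖f‖ ^ 2 := by
  have apply_le {y : A} (hy : ‖y‖ ≤ 1) :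
      ‖(f - f.comp (ContinuousLinearMap.mul 𝕜 A p)) y‖ ≤ √(‖f‖ ^ 2 - ‖f (p * x)‖ ^ 2) := by
    have := norm_apply_mul_sq_add_norm_apply_one_sub_mul_sq_le f hp hx hy
    rw [sub_mul, one_mul, map_sub] at this
    exact Real.le_sqrt_of_sq_le (le_sub_iff_add_le'.2 this)
  have nonneg : 0 ≤ ‖f‖ ^ 2 - ‖f (p * x)‖ ^ 2 := by
    simpa using norm_apply_mul_sq_add_norm_apply_one_sub_mul_sq_le f hp hx (y := 0) (by simp)
  rw [← le_sub_iff_add_le', ← Real.le_sqrt (norm_nonneg _) nonneg]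
  exact ContinuousLinearMap.opNorm_le_of_unit_norm (Real.sqrt_nonneg _) fun y hy ↦ apply_le hy.le

lemma tendsto_comp_mul_of_norm_comp_subtypeL_eq {κ : Type*} {l : Filter κ} {p : κ → A}
    (hp : ∀ k, IsStarProjection (p k)) {N : Submodule 𝕜 A}
    (hpN : ∀ x ∈ N, Tendsto (fun k ↦ p k * x) l (𝓝 x)) {f : StrongDual 𝕜 A}
    (hf : ‖f.comp N.subtypeL‖ = ‖f‖) :
    Tendsto (fun k ↦ f.comp (ContinuousLinearMap.mul 𝕜 A (p k))) l (𝓝 f) := by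
  rw [Metric.tendsto_nhds]
  intro ε hε
  obtain ⟨x, hxN, hx, hfx⟩ := exists_mem_norm_sq_sub_lt_norm_apply_sq hf (pow_pos hε 2)
  have tendsto_norm_sq : Tendsto (fun k ↦ ‖f (p k * x)‖ ^ 2) l (𝓝 (‖f x‖ ^ 2)) :=
    (((f.continuous.tendsto x).comp (hpN x hxN)).norm).pow 2
  filter_upwards [tendsto_norm_sq.eventually (lt_mem_nhds hfx)] with k hk
  have pythagorean := norm_apply_mul_sq_add_norm_sub_comp_mul_sq_le f (hp k) hx
  rw [dist_comm, dist_eq_norm]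
  exact lt_of_pow_lt_pow_left₀ 2 hε.le (by linarith)

end CStarRing

lemma tendsto_mul_of_mem_topologicalClosure_span {𝕜 A κ : Type*} [NontriviallyNormedField 𝕜]
    [NormedRing A] [NormedAlgebra 𝕜 A] {l : Filter κ} {p : κ → A} (hp : ∀ k, ‖p k‖ ≤ 1)
    {D : Set A} (hD : ∀ x ∈ D, Tendsto (fun k ↦ p k * x) l (𝓝 x)) :
    ∀ x ∈ (Submodule.span 𝕜 D).topologicalClosure, Tendsto (fun k ↦ p k * x) l (𝓝 x) := by
  let M : Submodule 𝕜 A :=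
    { carrier := {x | Tendsto (fun k ↦ p k * x) l (𝓝 x)}
      zero_mem' := by simpa using tendsto_const_nhds
      add_mem' := fun hx hy ↦ by simpa only [Set.mem_ofPred_eq, mul_add] using hx.add hy
      smul_mem' := fun c x hx ↦ by
        simpa only [Set.mem_ofPred_eq, mul_smul_comm] using hx.const_smul c }
  have lipschitz (k : κ) : LipschitzWith 1 (fun x ↦ p k * x) :=
    LipschitzWith.of_dist_le_mul fun x y ↦ by
      rw [dist_eq_norm, dist_eq_norm, ← mul_sub]
      exact (norm_mul_le _ _).trans (mul_le_mul_of_nonneg_right (hp k) (norm_nonneg _))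
  have isClosed_M : IsClosed (M : Set A) :=
    (LipschitzWith.uniformEquicontinuous _ 1 lipschitz).equicontinuous.isClosed_setOfPred_tendsto
      continuous_id
  exact Submodule.topologicalClosure_minimal _ (Submodule.span_le.2 fun x hx ↦ hD x hx) isClosed_M

variable {𝕜 H ι : Type*} [RCLike 𝕜] [NormedAddCommGroup H] [InnerProductSpace 𝕜 H]

section NormalFunctionals

/-- The vector functionals `X ↦ ⟪x, X y⟫` on a space `S` of operators, bundled as a sesquilinear map
of `x` and `y` with values in the dual of `S`. -/
def vectorFunctional (S : Submodule 𝕜 (H →L[𝕜] H)) : H →L⋆[𝕜] H →L[𝕜] StrongDual 𝕜 S :=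
  (compL 𝕜 S H 𝕜).bilinearComp (innerSL 𝕜) S.subtypeL.flip

lemma vectorFunctional_apply (S : Submodule 𝕜 (H →L[𝕜] H)) (x y : H) (X : S) :
    vectorFunctional S x y X = ⟪x, (X : H →L[𝕜] H) y⟫_𝕜 := rfl

/-- The norm-closed span of the vector functionals on `S`, in analogy with the normal functionals
on `B(H)`. -/
def normalFunctionals (S : Submodule 𝕜 (H →L[𝕜] H)) : Submodule 𝕜 (StrongDual 𝕜 S) :=
  (Submodule.span 𝕜 {f | ∃ x y, vectorFunctional S x y = f}).topologicalClosure

lemma vectorFunctional_mem_normalFunctionals (S : Submodule 𝕜 (H →L[𝕜] H)) (x y : H) :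
    vectorFunctional S x y ∈ normalFunctionals S :=
  Submodule.le_topologicalClosure _ (Submodule.subset_span ⟨x, y, rfl⟩)

variable [CompleteSpace H]

/-- The operator `T` with `⟪x, T y⟫ = B x y`; the adjoint is there because
`continuousLinearMapOfBilin` puts the operator on the left of the inner product. -/
def operatorOfForm (B : H →L⋆[𝕜] H →L[𝕜] 𝕜) : H →L[𝕜] H :=
  adjoint (continuousLinearMapOfBilin B)

lemma inner_operatorOfForm (B : H →L⋆[𝕜] H →L[𝕜] 𝕜) (x y : H) :
    ⟪x, operatorOfForm B y⟫_𝕜 = B x y := by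
  rw [operatorOfForm, ContinuousLinearMap.adjoint_inner_right, continuousLinearMapOfBilin_apply]

/-- The operator `D` that represents `f` on the rank-one operators: in trace notation,
`f (rankOne x y) = tr (D ∘ rankOne x y)`. -/
def densityOperator (f : StrongDual 𝕜 (H →L[𝕜] H)) : H →L[𝕜] H :=
  operatorOfForm ((compL 𝕜 H (H →L[𝕜] H) 𝕜 f).comp (rankOne 𝕜).flip)

lemma inner_densityOperator (f : StrongDual 𝕜 (H →L[𝕜] H)) (x y : H) :
    ⟪x, densityOperator f y⟫_𝕜 = f (rankOne 𝕜 y x) :=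
  inner_operatorOfForm _ x y

lemma apply_rankOne_mul (f : StrongDual 𝕜 (H →L[𝕜] H)) (x y : H) (T : H →L[𝕜] H) :
    f (rankOne 𝕜 x y * T) = ⟪y, T (densityOperator f x)⟫_𝕜 := by
  rw [ContinuousLinearMap.mul_def, rankOne_comp, ← inner_densityOperator,
    ContinuousLinearMap.adjoint_inner_left]

end NormalFunctionals

section CoordinateProjection

variable (𝕜) in
/-- The finite sum `∑ i ∈ s, rankOne (v i) (v i)`; for orthonormal `v` it is the orthogonal
projection onto the span of the `v i` with `i ∈ s`. -/
def coordinateProjection (v : ι → H) (s : Finset ι) : H →L[𝕜] H := ∑ i ∈ s, rankOne 𝕜 (v i) (v i)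

lemma coordinateProjection_apply_of_mem {v : ι → H} (hv : Orthonormal 𝕜 v) {s : Finset ι} {i : ι}
    (hi : i ∈ s) : coordinateProjection 𝕜 v s (v i) = v i := by
  classical
  simp [coordinateProjection, orthonormal_iff_ite.1 hv, hi]

lemma coordinateProjection_mul_rankOne {v : ι → H} (hv : Orthonormal 𝕜 v) {s : Finset ι} {i : ι}
    (hi : i ∈ s) (y : H) :
    coordinateProjection 𝕜 v s * rankOne 𝕜 (v i) y = rankOne 𝕜 (v i) y := by
  rw [ContinuousLinearMap.mul_def, comp_rankOne, coordinateProjection_apply_of_mem hv hi]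

lemma coordinateProjection_mul_mul (v : ι → H) (s : Finset ι) (T : H →L[𝕜] H) :
    coordinateProjection 𝕜 v s * T * coordinateProjection 𝕜 v s =
      ∑ i ∈ s, ∑ j ∈ s, ⟪v i, T (v j)⟫_𝕜 • rankOne 𝕜 (v i) (v j) := by
  have sandwich (i j : ι) : rankOne 𝕜 (v i) (v i) * T * rankOne 𝕜 (v j) (v j) =
      ⟪v i, T (v j)⟫_𝕜 • rankOne 𝕜 (v i) (v j) := by
    rw [mul_assoc, ContinuousLinearMap.mul_def, ContinuousLinearMap.mul_def, comp_rankOne,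
      rankOne_comp_rankOne]
  simp only [coordinateProjection, Finset.sum_mul, Finset.mul_sum, sandwich]
  exact Finset.sum_comm

lemma tendsto_coordinateProjection_apply (b : HilbertBasis ι 𝕜 H) (x : H) :
    Tendsto (fun s ↦ coordinateProjection 𝕜 b s x) atTop (𝓝 x) := by
  simpa [HasSum, coordinateProjection, b.repr_apply_apply] using b.hasSum_repr x

variable [CompleteSpace H]

lemma isStarProjection_coordinateProjection {v : ι → H} (hv : Orthonormal 𝕜 v) (s : Finset ι) :
    IsStarProjection (coordinateProjection 𝕜 v s) where
  isIdempotentElem := by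
    rw [IsIdempotentElem]
    nth_rw 2 3 [coordinateProjection]
    rw [Finset.mul_sum]
    exact Finset.sum_congr rfl fun i hi ↦ coordinateProjection_mul_rankOne hv hi (v i)
  isSelfAdjoint := by
    simp [isSelfAdjoint_iff, coordinateProjection, ContinuousLinearMap.star_eq_adjoint]

lemma comp_mul_coordinateProjection_comp_subtypeL (f : StrongDual 𝕜 (H →L[𝕜] H)) (v : ι → H)
    (s : Finset ι) (N : Submodule 𝕜 (H →L[𝕜] H)) :
    (f.comp (ContinuousLinearMap.mul 𝕜 _ (coordinateProjection 𝕜 v s))).comp N.subtypeL =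
      ∑ i ∈ s, vectorFunctional N (v i) (densityOperator f (v i)) := by
  ext X
  simp [coordinateProjection, apply_rankOne_mul, vectorFunctional_apply]

theorem normalFunctionals_eq_top_of_tendsto {v : ι → H} (hv : Orthonormal 𝕜 v)
    {N : Submodule 𝕜 (H →L[𝕜] H)}
    (hN : ∀ X ∈ N, Tendsto (fun s ↦ coordinateProjection 𝕜 v s * X) atTop (𝓝 X)) :
    normalFunctionals N = ⊤ := by
  rw [eq_top_iff]
  intro f _
  obtain ⟨g, g_extends, norm_g⟩ := exists_extension_norm_eq N f
  have restrict_g : g.comp N.subtypeL = f := ContinuousLinearMap.ext g_extends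
  have tendsto_g := tendsto_comp_mul_of_norm_comp_subtypeL_eq
    (isStarProjection_coordinateProjection hv) hN (by rw [restrict_g, norm_g])
  let restriction := (compL 𝕜 N (H →L[𝕜] H) 𝕜).flip N.subtypeL
  have tendsto_f := (restriction.continuous.tendsto g).comp tendsto_g
  simp only [restriction, ContinuousLinearMap.flip_apply, ContinuousLinearMap.compL_apply,
    restrict_g, Function.comp_def, comp_mul_coordinateProjection_comp_subtypeL] at tendsto_f
  exact (Submodule.isClosed_topologicalClosure _).mem_of_tendsto tendsto_f <| .of_forall fun s ↦
    sum_mem fun i _ ↦ vectorFunctional_mem_normalFunctionals N _ _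

end CoordinateProjection

section UnitalHull

/-- The linear span of `N` and the identity operator. -/
def unitalHull (N : Submodule 𝕜 (H →L[𝕜] H)) : Submodule 𝕜 (H →L[𝕜] H) :=
  Submodule.span 𝕜 {1} ⊔ N

lemma one_mem_unitalHull (N : Submodule 𝕜 (H →L[𝕜] H)) : 1 ∈ unitalHull N :=
  Submodule.mem_sup_left (Submodule.mem_span_singleton_self _)

variable {N : Submodule 𝕜 (H →L[𝕜] H)} {x : H}

lemma sub_inner_smul_one_mem (hx : ‖x‖ = 1) (hxN : ∀ X ∈ N, ⟪x, X x⟫_𝕜 = 0) {X : H →L[𝕜] H}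
    (hX : X ∈ unitalHull N) : X - ⟪x, X x⟫_𝕜 • (1 : H →L[𝕜] H) ∈ N := by
  obtain ⟨_, hc, Y, hY, rfl⟩ := Submodule.mem_sup.1 hX
  obtain ⟨c, rfl⟩ := Submodule.mem_span_singleton.1 hc
  have inner_eq : ⟪x, (c • (1 : H →L[𝕜] H) + Y) x⟫_𝕜 = c := by
    simp [inner_add_right, inner_smul_right, hxN Y hY, inner_self_eq_norm_sq_to_K, hx]
  rwa [inner_eq, add_sub_cancel_left]

/-- The projection `X ↦ X - ⟪x, X x⟫ • 1` of the unital hull of `N` onto `N`, for a unit vector `x`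
whose vector state vanishes on `N`. -/
def subVectorState (hx : ‖x‖ = 1) (hxN : ∀ X ∈ N, ⟪x, X x⟫_𝕜 = 0) :
    unitalHull N →L[𝕜] N :=
  (Submodule.subtypeL _ - (vectorFunctional _ x x).smulRight (1 : H →L[𝕜] H)).codRestrict N
    fun X ↦ sub_inner_smul_one_mem hx hxN X.2

lemma coe_subVectorState (hx : ‖x‖ = 1) (hxN : ∀ X ∈ N, ⟪x, X x⟫_𝕜 = 0) (X : unitalHull N) :
    (subVectorState hx hxN X : H →L[𝕜] H) = X - ⟪x, (X : H →L[𝕜] H) x⟫_𝕜 • (1 : H →L[𝕜] H) := rfl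

lemma vectorFunctional_comp_subVectorState (hx : ‖x‖ = 1) (hxN : ∀ X ∈ N, ⟪x, X x⟫_𝕜 = 0)
    (y z : H) : (vectorFunctional N y z).comp (subVectorState hx hxN) =
      vectorFunctional _ y z - ⟪y, z⟫_𝕜 • vectorFunctional _ x x := by
  ext X
  simp [vectorFunctional_apply, coe_subVectorState, inner_sub_right, inner_smul_right, mul_comm]

lemma comp_subVectorState_mem_normalFunctionals (hx : ‖x‖ = 1) (hxN : ∀ X ∈ N, ⟪x, X x⟫_𝕜 = 0)
    {f : StrongDual 𝕜 N} (hf : f ∈ normalFunctionals N) :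
    f.comp (subVectorState hx hxN) ∈ normalFunctionals (unitalHull N) := by
  let pullback := (compL 𝕜 _ N 𝕜).flip (subVectorState hx hxN)
  have le_comap : normalFunctionals N ≤ (normalFunctionals _).comap pullback.toLinearMap := by
    refine Submodule.topologicalClosure_minimal _ (Submodule.span_le.2 ?_)
      ((Submodule.isClosed_topologicalClosure _).preimage pullback.continuous)
    rintro _ ⟨y, z, rfl⟩
    change (vectorFunctional N y z).comp (subVectorState hx hxN) ∈ normalFunctionals _
    rw [vectorFunctional_comp_subVectorState]
    exact sub_mem (vectorFunctional_mem_normalFunctionals _ _ _)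
      (Submodule.smul_mem _ _ (vectorFunctional_mem_normalFunctionals _ _ _))
  exact le_comap hf

theorem normalFunctionals_unitalHull_eq_top (hx : ‖x‖ = 1) (hxN : ∀ X ∈ N, ⟪x, X x⟫_𝕜 = 0)
    (hN : normalFunctionals N = ⊤) : normalFunctionals (unitalHull N) = ⊤ := by
  rw [eq_top_iff]
  intro f _
  let unit : unitalHull N := ⟨1, one_mem_unitalHull N⟩
  let inclusion : N →L[𝕜] unitalHull N :=
    N.subtypeL.codRestrict _ fun X ↦ Submodule.mem_sup_right X.2
  have decomposition : f = f unit • vectorFunctional _ x x +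
      (f.comp inclusion).comp (subVectorState hx hxN) := by
    ext X
    have : X = vectorFunctional _ x x X • unit + inclusion (subVectorState hx hxN X) :=
      Subtype.ext (add_sub_cancel _ _).symm
    conv_lhs => rw [this]
    simp [mul_comm]
  rw [decomposition]
  exact add_mem (Submodule.smul_mem _ _ (vectorFunctional_mem_normalFunctionals _ _ _))
    (comp_subVectorState_mem_normalFunctionals hx hxN (hN ▸ Submodule.mem_top))

end UnitalHull

section Bidual

lemma exists_bidual_tendsto_apply {V κ : Type*} [NormedAddCommGroup V] [NormedSpace 𝕜 V]
    (l : Ultrafilter κ) {v : κ → V} {C : ℝ} (hv : ∀ k, ‖v k‖ ≤ C) :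
    ∃ F : StrongDual 𝕜 (StrongDual 𝕜 V), ∀ f, Tendsto (fun k ↦ f (v k)) l (𝓝 (F f)) := by
  let u (k : κ) : WeakDual 𝕜 (StrongDual 𝕜 V) :=
    WeakDual.toStrongDual.symm (NormedSpace.inclusionInDoubleDual 𝕜 V (v k))
  have mem_closedBall (k : κ) : u k ∈ WeakDual.toStrongDual ⁻¹' Metric.closedBall 0 C :=
    mem_closedBall_zero_iff.2 ((NormedSpace.double_dual_bound 𝕜 V (v k)).trans (hv k))
  obtain ⟨F, -, le_nhds⟩ :=
    (WeakDual.isCompact_closedBall (0 : StrongDual 𝕜 (StrongDual 𝕜 V)) C).ultrafilter_le_nhds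
      (l.map u) (le_principal_iff.2 (mem_map.2 (univ_mem' mem_closedBall)))
  exact ⟨WeakDual.toStrongDual F, fun f ↦ ((WeakDual.eval_continuous f).tendsto F).comp le_nhds⟩

variable [CompleteSpace H] (S : Submodule 𝕜 (H →L[𝕜] H))

/-- The operator `T` attached to `F` in the bidual of `S` by `⟪x, T y⟫ = F (X ↦ ⟪x, X y⟫)`. -/
def bidualToOperator : StrongDual 𝕜 (StrongDual 𝕜 S) →ₗ[𝕜] H →L[𝕜] H where
  toFun F := operatorOfForm ((compL 𝕜 H (StrongDual 𝕜 S) 𝕜 F).comp (vectorFunctional S))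
  map_add' F G := ContinuousLinearMap.ext fun y ↦ ext_inner_left 𝕜 fun x ↦ by
    simp [inner_operatorOfForm, inner_add_right]
  map_smul' c F := ContinuousLinearMap.ext fun y ↦ ext_inner_left 𝕜 fun x ↦ by
    simp [inner_operatorOfForm, inner_smul_right]

lemma inner_bidualToOperator (F : StrongDual 𝕜 (StrongDual 𝕜 S)) (x y : H) :
    ⟪x, bidualToOperator S F y⟫_𝕜 = F (vectorFunctional S x y) :=
  inner_operatorOfForm _ x y

lemma bidualToOperator_inclusionInDoubleDual (X : S) :
    bidualToOperator S (NormedSpace.inclusionInDoubleDual 𝕜 S X) = X :=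
  ContinuousLinearMap.ext fun y ↦ ext_inner_left 𝕜 fun x ↦ inner_bidualToOperator S _ x y

variable {S}

lemma bidualToOperator_injective (hS : normalFunctionals S = ⊤) :
    Function.Injective (bidualToOperator S) := by
  rw [← LinearMap.ker_eq_bot, LinearMap.ker_eq_bot']
  intro F hF
  have le_ker : normalFunctionals S ≤ F.ker := by
    refine Submodule.topologicalClosure_minimal _ (Submodule.span_le.2 ?_) F.isClosed_ker
    rintro _ ⟨x, y, rfl⟩
    change F (vectorFunctional S x y) = 0
    rw [← inner_bidualToOperator, hF, zero_apply, inner_zero_right]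
  ext f
  exact le_ker (hS ▸ Submodule.mem_top)

lemma exists_bidualToOperator_eq_of_tendsto {κ : Type*} {l : Filter κ} [l.NeBot] {X : κ → S} {C : ℝ}
    (norm_le : ∀ k, ‖X k‖ ≤ C) {T : H →L[𝕜] H}
    (tendsto : ∀ x y, Tendsto (fun k ↦ ⟪x, (X k : H →L[𝕜] H) y⟫_𝕜) l (𝓝 ⟪x, T y⟫_𝕜)) :
    ∃ F : StrongDual 𝕜 (StrongDual 𝕜 S), bidualToOperator S F = T ∧
      ∀ f, Tendsto (fun k ↦ f (X k)) (Ultrafilter.of l) (𝓝 (F f)) := by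
  obtain ⟨F, hF⟩ := exists_bidual_tendsto_apply (𝕜 := 𝕜) (Ultrafilter.of l) norm_le
  refine ⟨F, ContinuousLinearMap.ext fun y ↦ ext_inner_left 𝕜 fun x ↦ ?_, hF⟩
  rw [inner_bidualToOperator]
  exact tendsto_nhds_unique (hF _) ((tendsto x y).mono_left (Ultrafilter.of_le l))

end Bidual

section Complex

variable {H : Type*} [NormedAddCommGroup H] [InnerProductSpace ℂ H]

lemma isPositive_iff_inner_nonneg (T : H →L[ℂ] H) : T.IsPositive ↔ ∀ x, 0 ≤ ⟪x, T x⟫_ℂ := by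
  refine ⟨fun hT ↦ hT.inner_nonneg_right, fun hT ↦ ?_⟩
  refine (ContinuousLinearMap.isPositive_iff_complex T).2 fun x ↦ ?_
  have inner_comm : ⟪T x, x⟫_ℂ = ⟪x, T x⟫_ℂ := by
    rw [← inner_conj_symm]
    exact (hT x).isSelfAdjoint.star_eq
  rw [inner_comm]
  exact ⟨(Complex.eq_re_of_ofReal_le (hT x)).symm, (Complex.nonneg_iff.1 (hT x)).1⟩

variable [CompleteSpace H]

theorem exists_bidual_unital_orderIso {S : Submodule ℂ (H →L[ℂ] H)} (one_mem : 1 ∈ S)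
    (hS : normalFunctionals S = ⊤) {κ : Type*} {l : Filter κ} [l.NeBot]
    (R : κ → (H →L[ℂ] H) → S) (norm_le : ∀ T, ∃ C, ∀ k, ‖R k T‖ ≤ C)
    (isPositive : ∀ k T, T.IsPositive → (R k T : H →L[ℂ] H).IsPositive)
    (tendsto : ∀ T x y, Tendsto (fun k ↦ ⟪x, (R k T : H →L[ℂ] H) y⟫_ℂ) l (𝓝 ⟪x, T y⟫_ℂ)) :
    ∃ Φ : StrongDual ℂ (StrongDual ℂ S) ≃ₗ[ℂ] (H →L[ℂ] H),
      Φ (NormedSpace.inclusionInDoubleDual ℂ S ⟨1, one_mem⟩) = 1 ∧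
      ∀ F : StrongDual ℂ (StrongDual ℂ S),
        (∀ f : StrongDual ℂ S, (∀ X : S, (X : H →L[ℂ] H).IsPositive → 0 ≤ f X) → 0 ≤ F f) ↔
          (Φ F).IsPositive := by
  have injective := bidualToOperator_injective hS
  have exists_limit (T : H →L[ℂ] H) : ∃ F, bidualToOperator S F = T ∧
      ∀ f, Tendsto (fun k ↦ f (R k T)) (Ultrafilter.of l) (𝓝 (F f)) :=
    (norm_le T).elim fun C hC ↦ exists_bidualToOperator_eq_of_tendsto hC (tendsto T)
  have surjective : Function.Surjective (bidualToOperator S) := fun T ↦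
    (exists_limit T).imp fun F hF ↦ hF.1
  refine ⟨.ofBijective (bidualToOperator S) ⟨injective, surjective⟩,
    bidualToOperator_inclusionInDoubleDual S _, fun F ↦ ⟨fun hF ↦ ?_, fun hF f hf ↦ ?_⟩⟩
  · refine (isPositive_iff_inner_nonneg _).2 fun x ↦ ?_
    change 0 ≤ ⟪x, bidualToOperator S F x⟫_ℂ
    rw [inner_bidualToOperator]
    exact hF _ fun X hX ↦ hX.inner_nonneg_right x
  · obtain ⟨G, hG, tendsto_G⟩ := exists_limit (bidualToOperator S F)
    rw [← injective hG]
    exact ge_of_tendsto' (tendsto_G f) fun k ↦ hf _ (isPositive k _ hF)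

end Complex

section PuncturedMatrixSpan

variable (𝕜) in
/-- The norm-closed span of the matrix units `rankOne (v i) (v j)` other than the `(i₀, i₀)` one. -/
def puncturedMatrixSpan (v : ι → H) (i₀ : ι) : Submodule 𝕜 (H →L[𝕜] H) :=
  (Submodule.span 𝕜 {T | ∃ i j, (i, j) ≠ (i₀, i₀) ∧ T = rankOne 𝕜 (v i) (v j)}).topologicalClosure

lemma rankOne_mem_puncturedMatrixSpan (v : ι → H) {i₀ i j : ι} (hij : (i, j) ≠ (i₀, i₀)) :
    rankOne 𝕜 (v i) (v j) ∈ puncturedMatrixSpan 𝕜 v i₀ :=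
  Submodule.le_topologicalClosure _ (Submodule.subset_span ⟨i, j, hij, rfl⟩)

lemma inner_apply_eq_zero_of_mem_puncturedMatrixSpan {v : ι → H} (hv : Orthonormal 𝕜 v) {i₀ : ι} :
    ∀ X ∈ puncturedMatrixSpan 𝕜 v i₀, ⟪v i₀, X (v i₀)⟫_𝕜 = 0 := by
  let vectorState : StrongDual 𝕜 (H →L[𝕜] H) :=
    (innerSL 𝕜 (v i₀)).comp (ContinuousLinearMap.apply 𝕜 H (v i₀))
  have le_ker : puncturedMatrixSpan 𝕜 v i₀ ≤ vectorState.ker := by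
    refine Submodule.topologicalClosure_minimal _ (Submodule.span_le.2 ?_) vectorState.isClosed_ker
    rintro _ ⟨i, j, hij, rfl⟩
    change ⟪v i₀, rankOne 𝕜 (v i) (v j) (v i₀)⟫_𝕜 = 0
    rw [inner_right_rankOne_apply]
    by_cases hi : i = i₀
    · have hj : j ≠ i₀ := fun hj ↦ hij (Prod.ext hi hj)
      rw [hv.inner_eq_zero hj, mul_zero]
    · rw [hv.inner_eq_zero (Ne.symm hi), zero_mul]
  exact fun X hX ↦ le_ker hX

lemma tendsto_coordinateProjection_mul_of_mem_puncturedMatrixSpan [CompleteSpace H] {v : ι → H}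
    (hv : Orthonormal 𝕜 v) {i₀ : ι} :
    ∀ X ∈ puncturedMatrixSpan 𝕜 v i₀,
      Tendsto (fun s ↦ coordinateProjection 𝕜 v s * X) atTop (𝓝 X) := by
  refine tendsto_mul_of_mem_topologicalClosure_span
    (fun s ↦ (isStarProjection_coordinateProjection hv s).norm_le) ?_
  rintro _ ⟨i, j, -, rfl⟩
  refine tendsto_const_nhds.congr' ?_
  filter_upwards [eventually_ge_atTop {i}] with s hs
  exact (coordinateProjection_mul_rankOne hv (Finset.singleton_subset_iff.1 hs) (v j)).symm

theorem normalFunctionals_unitalHull_puncturedMatrixSpan_eq_top [CompleteSpace H] {v : ι → H}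
    (hv : Orthonormal 𝕜 v) (i₀ : ι) :
    normalFunctionals (unitalHull (puncturedMatrixSpan 𝕜 v i₀)) = ⊤ :=
  normalFunctionals_unitalHull_eq_top (hv.norm_eq_one i₀)
    (inner_apply_eq_zero_of_mem_puncturedMatrixSpan hv)
    (normalFunctionals_eq_top_of_tendsto hv
      (tendsto_coordinateProjection_mul_of_mem_puncturedMatrixSpan hv))

end PuncturedMatrixSpan

section CornerExtension

/-- The corner `p T p`, extended to the complement of `p` by the scalar `⟪x, T x⟫`. When `x` is the
basis vector whose diagonal matrix unit is missing, this scalar is what puts the operator into the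
unital hull of the punctured matrix span. -/
def cornerExtension (p : H →L[𝕜] H) (x : H) (T : H →L[𝕜] H) : H →L[𝕜] H :=
  p * T * p + ⟪x, T x⟫_𝕜 • (1 - p)

lemma cornerExtension_mem_unitalHull (v : ι → H) (i₀ : ι) (s : Finset ι) (T : H →L[𝕜] H) :
    cornerExtension (coordinateProjection 𝕜 v s) (v i₀) T ∈
      unitalHull (puncturedMatrixSpan 𝕜 v i₀) := by
  classical
  set c := ⟪v i₀, T (v i₀)⟫_𝕜 with hc
  have smul_coordinateProjection : c • coordinateProjection 𝕜 v s =
      ∑ i ∈ s, ∑ j ∈ s, (if i = j then c else 0) • rankOne 𝕜 (v i) (v j) := by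
    simp [coordinateProjection, ite_smul, Finset.smul_sum]
  have corner_sub_mem : coordinateProjection 𝕜 v s * T * coordinateProjection 𝕜 v s -
      c • coordinateProjection 𝕜 v s ∈ puncturedMatrixSpan 𝕜 v i₀ := by
    rw [coordinateProjection_mul_mul, smul_coordinateProjection, ← Finset.sum_sub_distrib]
    refine sum_mem fun i _ ↦ ?_
    rw [← Finset.sum_sub_distrib]
    refine sum_mem fun j _ ↦ ?_
    rw [← sub_smul]
    by_cases hij : (i, j) = (i₀, i₀)
    · obtain ⟨rfl, rfl⟩ := Prod.mk.inj hij
      rw [if_pos rfl, hc, sub_self, zero_smul]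
      exact zero_mem _
    · exact Submodule.smul_mem _ _ (rankOne_mem_puncturedMatrixSpan v hij)
  have decomposition : cornerExtension (coordinateProjection 𝕜 v s) (v i₀) T =
      c • 1 + (coordinateProjection 𝕜 v s * T * coordinateProjection 𝕜 v s -
        c • coordinateProjection 𝕜 v s) := by
    rw [cornerExtension, smul_sub]
    abel
  rw [decomposition]
  exact add_mem (Submodule.smul_mem _ c (one_mem_unitalHull _))
    (Submodule.mem_sup_right corner_sub_mem)

variable [CompleteSpace H]

lemma norm_cornerExtension_le {p : H →L[𝕜] H} (hp : IsStarProjection p) (x : H) (T : H →L[𝕜] H) :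
    ‖cornerExtension p x T‖ ≤ ‖T‖ + ‖⟪x, T x⟫_𝕜‖ := by
  refine norm_add_le_of_le ?_ ?_
  · calc ‖p * T * p‖ ≤ ‖p‖ * ‖T‖ * ‖p‖ := norm_mul₃_le
      _ ≤ 1 * ‖T‖ * 1 := by gcongr <;> exact hp.norm_le
      _ = ‖T‖ := by rw [one_mul, mul_one]
  · rw [norm_smul]
    exact mul_le_of_le_one_right (norm_nonneg _) hp.one_sub.norm_le

lemma isPositive_cornerExtension {p : H →L[𝕜] H} (hp : IsStarProjection p) (x : H) {T : H →L[𝕜] H}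
    (hT : T.IsPositive) : (cornerExtension p x T).IsPositive := by
  have corner : (p * T * p).IsPositive := by
    have := hT.conj_adjoint p
    rwa [hp.isSelfAdjoint.adjoint_eq] at this
  exact corner.add ((ContinuousLinearMap.IsPositive.of_isStarProjection hp.one_sub).smul_of_nonneg
    (hT.inner_nonneg_right x))

lemma inner_cornerExtension {p : H →L[𝕜] H} (hp : IsStarProjection p) (x : H) (T : H →L[𝕜] H)
    (y z : H) : ⟪y, cornerExtension p x T z⟫_𝕜 =
      ⟪p y, T (p z)⟫_𝕜 + ⟪x, T x⟫_𝕜 * ⟪y, z - p z⟫_𝕜 := by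
  have inner_apply (w : H) : ⟪p y, w⟫_𝕜 = ⟪y, p w⟫_𝕜 := by
    rw [← ContinuousLinearMap.adjoint_inner_right, hp.isSelfAdjoint.adjoint_eq]
  simp [cornerExtension, inner_add_right, inner_smul_right, inner_apply]

lemma tendsto_inner_cornerExtension {κ : Type*} {l : Filter κ} {p : κ → H →L[𝕜] H}
    (hp : ∀ k, IsStarProjection (p k)) (tendsto_p : ∀ y, Tendsto (fun k ↦ p k y) l (𝓝 y))
    (x : H) (T : H →L[𝕜] H) (y z : H) :
    Tendsto (fun k ↦ ⟪y, cornerExtension (p k) x T z⟫_𝕜) l (𝓝 ⟪y, T z⟫_𝕜) := by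
  have corner : Tendsto (fun k ↦ ⟪p k y, T (p k z)⟫_𝕜) l (𝓝 ⟪y, T z⟫_𝕜) :=
    (tendsto_p y).inner ((T.continuous.tendsto z).comp (tendsto_p z))
  have remainder : Tendsto (fun k ↦ ⟪x, T x⟫_𝕜 * ⟪y, z - p k z⟫_𝕜) l (𝓝 0) := by
    simpa using ((tendsto_const_nhds (x := y)).inner (𝕜 := 𝕜)
      ((tendsto_const_nhds (x := z)).sub (tendsto_p z))).const_mul ⟪x, T x⟫_𝕜
  simpa only [inner_cornerExtension (hp _), add_zero] using corner.add remainder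

end CornerExtension

theorem stmt_10_general {ι H : Type*} [NormedAddCommGroup H] [InnerProductSpace ℂ H]
    [CompleteSpace H] (b : HilbertBasis ι ℂ H) (i₀ : ι) {S : Submodule ℂ (H →L[ℂ] H)}
    (hS : S = unitalHull (puncturedMatrixSpan ℂ b i₀)) :
    ∃ Φ : StrongDual ℂ (StrongDual ℂ S) ≃ₗ[ℂ] (H →L[ℂ] H),
      Φ (NormedSpace.inclusionInDoubleDual ℂ S ⟨1, hS.ge (one_mem_unitalHull _)⟩) = 1 ∧
      ∀ F : StrongDual ℂ (StrongDual ℂ S),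
        (∀ f : StrongDual ℂ S, (∀ X : S, (X : H →L[ℂ] H).IsPositive → 0 ≤ f X) → 0 ≤ F f) ↔
          (Φ F).IsPositive := by
  subst hS
  have isStarProjection := isStarProjection_coordinateProjection b.orthonormal
  exact exists_bidual_unital_orderIso (l := atTop) _
    (normalFunctionals_unitalHull_puncturedMatrixSpan_eq_top b.orthonormal i₀)
    (fun s T ↦ ⟨_, cornerExtension_mem_unitalHull b i₀ s T⟩)
    (fun T ↦ ⟨_, fun s ↦ norm_cornerExtension_le (isStarProjection s) (b i₀) T⟩)
    (fun s _ ↦ isPositive_cornerExtension (isStarProjection s) (b i₀))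
    (tendsto_inner_cornerExtension isStarProjection (tendsto_coordinateProjection_apply b) (b i₀))

/-- The basis `e` of `ℓ²(ℕ)` as a Hilbert basis. -/
def standardBasis : HilbertBasis ℕ ℂ Hs := .ofRepr (LinearIsometryEquiv.refl ℂ Hs)

lemma coe_standardBasis : ⇑standardBasis = e :=
  funext fun i ↦ (standardBasis.repr_symm_single i).symm

lemma S0_eq_unitalHull : S0 = unitalHull (puncturedMatrixSpan ℂ standardBasis 0) := by
  rw [coe_standardBasis]
  rfl

end

/-- the bidual `S₀**` is unitally order isomorphic to `B(ℓ²(ℕ))`: there is a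
linear bijection `Φ : S₀** → B(ℓ²(ℕ))` sending the canonical image of the identity to the
identity operator, such that `F` lies in the positive cone of `S₀**` (i.e. `F` is
nonnegative on every positive functional on `S₀`) iff `Φ F` is a positive operator. -/
theorem stmt_10 :
    ∃ Φ : StrongDual ℂ (StrongDual ℂ ↥S0) ≃ₗ[ℂ] (Hs →L[ℂ] Hs),
      Φ (NormedSpace.inclusionInDoubleDual ℂ ↥S0 ⟨1, one_mem_S0⟩) = 1 ∧
      ∀ F : StrongDual ℂ (StrongDual ℂ ↥S0),
        (∀ f : StrongDual ℂ ↥S0,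
            (∀ X : ↥S0, (X : Hs →L[ℂ] Hs).IsPositive → 0 ≤ f X) → 0 ≤ F f) ↔
          (Φ F).IsPositive := by
  exact stmt_10_general standardBasis 0 S0_eq_unitalHull
end
end

section
/- Let S ⊆ B(H) be a finite-dimensional unital self-adjoint subspace of the bounded operators on a complex Hilbert space H (a finite-dimensional concrete operator system). Suppose there exist nets of unital completely positive maps φ_λ : S → M_{n_λ}(ℂ) and ψ_λ : M_{n_λ}(ℂ) → S such that ψ_λ ∘ φ_λ converges to the identity map of S in the point-norm topology. Then S is unitally completely order isomorphic to a finite direct sum of matrix algebras M_{m_1}(ℂ) ⊕ ⋯ ⊕ M_{m_k}(ℂ): there is a unital linear bijection from S onto such a direct sum such that the map and its inverse are completely positive. -/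
noncomputable section

/-- Complete positivity for a map defined on a subspace `S` of a C*-algebra `A`:
matrices over `S` which are positive in the C*-algebra of matrices over `A` are
mapped to positive matrices. -/
def IsCPsub {A B : Type*} [Ring A] [StarRing A] [Module ℂ A] [Ring B] [StarRing B]
    (S : Submodule ℂ A) (θ : ↥S → B) : Prop :=
  ∀ (m : ℕ) (M : Matrix (Fin m) (Fin m) ↥S),
    MatPos (M.map (fun x => (x : A))) → MatPos (M.map θ)

/-!
Let `S` be the operator system. Along an ultrafilter finer than the given net, the maps `φ l` and
`ψ l` assemble to unital completely positive maps `Φ : S → B` and `Ψ : B → S` with `Ψ ∘ Φ = id`,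
where `B` is the `ℓ^∞`-product of the matrix algebras. Thus `P = Φ ∘ Ψ` is a unital completely
positive idempotent whose range is a copy of `S`, and by Choi–Effros `x ∘ y = P (x y)` turns the
range into a `*`-algebra. It is finite-dimensional and has enough positive functionals, so it is
semisimple and hence, by Wedderburn, a direct sum of matrix algebras; on each block the involution
is conjugation of the standard one by a positive definite matrix, the Gram matrix of a column for a
positive functional, and a change of basis makes it standard. Finally, the order `S` inherits from
`B` and the one coming from the `*`-algebra structure agree at every matrix level, because both are
determined by compressions `N* M N`.
-/

open Filter Matrix Topology
open scoped ComplexOrder ENNReal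

section StarAlgebra

/-- A hermitian linear functional on a complex `*`-algebra that is nonnegative on the elements
`x* x`. No order on the algebra is assumed. -/
structure IsPositiveFunctional {T : Type*} [Ring T] [StarRing T] [Module ℂ T]
    (f : T →ₗ[ℂ] ℂ) : Prop where
  nonneg : ∀ x, 0 ≤ f (star x * x)
  map_star : ∀ x, f (star x) = star (f x)

theorem eq_zero_of_isSelfAdjoint_of_pow_two_pow_eq_zero {T : Type*} [Ring T] [StarRing T]
    (hT : ∀ x : T, star x * x = 0 → x = 0) {h : T} (hh : IsSelfAdjoint h) {k : ℕ}
    (hk : h ^ 2 ^ k = 0) : h = 0 := by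
  induction k generalizing h with
  | zero => simpa using hk
  | succ k ih =>
    refine hT h ?_
    rw [hh.star_eq, ← sq]
    exact ih (hh.pow 2) (by rwa [← pow_mul, ← pow_succ'])

theorem isSemisimpleRing_of_star_mul_self_eq_zero {T : Type*} [Ring T] [StarRing T]
    [IsArtinianRing T] (hT : ∀ x : T, star x * x = 0 → x = 0) : IsSemisimpleRing T := by
  rw [IsArtinianRing.isSemisimpleRing_iff_jacobson, eq_bot_iff]
  intro x hx
  obtain ⟨n, hn⟩ := IsArtinianRing.isNilpotent_jacobson_bot (R := T)
  have hmem : star x * x ∈ Ideal.jacobson (⊥ : Ideal T) := by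
    rw [Ideal.jacobson_bot]
    exact Ideal.mul_mem_left _ _ hx
  have hpow : (star x * x) ^ n = 0 := by simpa [hn] using Ideal.pow_mem_pow hmem n
  exact hT x <| eq_zero_of_isSelfAdjoint_of_pow_two_pow_eq_zero hT (.star_mul_self x)
    (pow_eq_zero_of_le Nat.lt_two_pow_self.le hpow)

section GramMatrix

variable {T : Type*} [Ring T] [StarRing T] [Algebra ℂ T] [StarModule ℂ T]
  {n : Type*} {f : T →ₗ[ℂ] ℂ}

/-- The Gram matrix of the family `x` for the sesquilinear form `(a, b) ↦ f (a* b)`. -/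
def gramMatrix (f : T →ₗ[ℂ] ℂ) (x : n → T) : Matrix n n ℂ := of fun v w => f (star (x v) * x w)

theorem IsPositiveFunctional.posSemidef_gramMatrix [Finite n] (hf : IsPositiveFunctional f)
    (x : n → T) : (gramMatrix f x).PosSemidef := by
  have := Fintype.ofFinite n
  refine .of_dotProduct_mulVec_nonneg ?_ fun c => ?_
  · ext v w
    simp [gramMatrix, ← hf.map_star]
  · convert hf.nonneg (∑ v, c v • x v) using 1
    rw [star_sum, Finset.sum_mul_sum, map_sum]
    refine Finset.sum_congr rfl fun v _ => ?_
    simp only [mulVec, dotProduct, gramMatrix, of_apply, Finset.mul_sum, map_sum]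
    exact Finset.sum_congr rfl fun w _ => by
      simp only [Pi.star_apply, star_smul, mul_smul_comm, smul_mul_assoc, map_smul, smul_eq_mul]
      ring

theorem conjTranspose_mul_gramMatrix [Fintype n] {x : n → T} {a : T} {R R' : Matrix n n ℂ}
    (hR : ∀ v, a * x v = ∑ u, R u v • x u) (hR' : ∀ v, star a * x v = ∑ u, R' u v • x u) :
    Rᴴ * gramMatrix f x = gramMatrix f x * R' := by
  ext v w
  calc (Rᴴ * gramMatrix f x) v w = f (star (a * x v) * x w) := by
        simp [hR, mul_apply, gramMatrix, Finset.sum_mul, star_sum]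
    _ = f (star (x v) * (star a * x w)) := by rw [star_mul, mul_assoc]
    _ = (gramMatrix f x * R') v w := by
        simp [hR', mul_apply, gramMatrix, Finset.mul_sum, mul_comm]

end GramMatrix

section Matrix

variable {n : Type*} [Fintype n] [DecidableEq n]

-- The kernel of `h` is invariant under every matrix, hence trivial.
theorem isUnit_of_forall_exists_mul_eq_mul {K : Type*} [Field K] {h : Matrix n n K}
    (hne : h ≠ 0) (hcomm : ∀ Z : Matrix n n K, ∃ Z', h * Z = Z' * h) : IsUnit h := by
  rw [← mulVec_injective_iff_isUnit]
  refine (injective_iff_map_eq_zero h.mulVecLin).mpr fun v (hv : h *ᵥ v = 0) => ?_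
  by_contra hv0
  obtain ⟨j, hj⟩ := Function.ne_iff.mp hv0
  refine hne (ext_of_mulVec_single fun i => ?_)
  obtain ⟨Z', hZ'⟩ := hcomm (single i j (v j)⁻¹)
  have hZ : single i j (v j)⁻¹ *ᵥ v = Pi.single i 1 := by
    rw [single_mulVec_eq, inv_mul_cancel₀ hj, one_smul]
  rw [← hZ, mulVec_mulVec, hZ', ← mulVec_mulVec, hv, mulVec_zero, zero_mulVec]

theorem exists_units_eq_conjTranspose_mul_self {h : Matrix n n ℂ} (hpsd : h.PosSemidef)
    (hunit : IsUnit h) : ∃ u : (Matrix n n ℂ)ˣ, h = u.valᴴ * u.val := by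
  open scoped MatrixOrder Matrix.Norms.L2Operator in
  obtain ⟨N, hN, rfl⟩ := CStarAlgebra.isStrictlyPositive_iff_eq_star_mul_self.mp
    (hunit.isStrictlyPositive hpsd.nonneg)
  exact ⟨hN.unit, rfl⟩

theorem conjTranspose_units_conj {u : (Matrix n n ℂ)ˣ} {R R' : Matrix n n ℂ}
    (h : Rᴴ * (u.valᴴ * u.val) = u.valᴴ * u.val * R') :
    (u.val * R * u⁻¹.val)ᴴ = u.val * R' * u⁻¹.val := by
  have hinv : u⁻¹.valᴴ * u.valᴴ = 1 := by
    rw [← conjTranspose_mul, u.mul_inv, conjTranspose_one]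
  calc (u.val * R * u⁻¹.val)ᴴ = u⁻¹.valᴴ * (Rᴴ * (u.valᴴ * u.val)) * u⁻¹.val := by
        simp only [conjTranspose_mul, Matrix.mul_assoc, u.mul_inv, Matrix.mul_one]
    _ = u.val * R' * u⁻¹.val := by
        simp only [h, ← Matrix.mul_assoc, hinv, Matrix.one_mul]

theorem mul_single_one_eq_sum {R : Type*} [Semiring R] (Z : Matrix n n R) (v w : n) :
    Z * single v w 1 = ∑ u, Z u v • single u w 1 := by
  ext s t
  simp [mul_apply, Matrix.sum_apply, single_apply, ite_and]

end Matrix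

section Wedderburn

variable {T : Type*} [Ring T] [Algebra ℂ T] {ι : Type*}
  {n : ι → Type*} [∀ i, Fintype (n i)] [∀ i, DecidableEq (n i)]

/-- The matrix unit `e_{vw}` of the `i`-th block, transported to `T`. -/
def blockMatrixUnit [DecidableEq ι] (g : T ≃ₐ[ℂ] ∀ i, Matrix (n i) (n i) ℂ) (i : ι) (v w : n i) :
    T :=
  g.symm (Pi.single i (single v w 1))

theorem blockMatrixUnit_ne_zero [DecidableEq ι] (g : T ≃ₐ[ℂ] ∀ i, Matrix (n i) (n i) ℂ) {i : ι}
    (v w : n i) :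
    blockMatrixUnit g i v w ≠ 0 := by
  simpa [blockMatrixUnit] using fun h => by simpa using congrFun₂ h v w

theorem mul_blockMatrixUnit [DecidableEq ι] (g : T ≃ₐ[ℂ] ∀ i, Matrix (n i) (n i) ℂ) (a : T)
    {i : ι} (v w : n i) :
    a * blockMatrixUnit g i v w = ∑ u, g a i u v • blockMatrixUnit g i u w := by
  apply g.injective
  simp only [map_mul, map_sum, map_smul, blockMatrixUnit, AlgEquiv.apply_symm_apply]
  ext1 j
  rcases eq_or_ne j i with rfl | hj
  · simp [mul_single_one_eq_sum]
  · simp [hj]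

theorem exists_units_conj_eq_conjTranspose [StarRing T] [StarModule ℂ T]
    (hT : ∀ x : T, x ≠ 0 → ∃ f : T →ₗ[ℂ] ℂ, IsPositiveFunctional f ∧ f (star x * x) ≠ 0)
    (g : T ≃ₐ[ℂ] ∀ i, Matrix (n i) (n i) ℂ) (i : ι) :
    ∃ u : (Matrix (n i) (n i) ℂ)ˣ,
      ∀ a, (u.val * g a i * u⁻¹.val)ᴴ = u.val * g (star a) i * u⁻¹.val := by
  classical
  rcases isEmpty_or_nonempty (n i) with _ | ⟨⟨w⟩⟩
  · exact ⟨1, fun a => Subsingleton.elim _ _⟩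
  obtain ⟨f, hf, hfw⟩ := hT _ (blockMatrixUnit_ne_zero g w w)
  have hcomm (a : T) : (g a i)ᴴ * gramMatrix f (blockMatrixUnit g i · w) =
      gramMatrix f (blockMatrixUnit g i · w) * g (star a) i :=
    conjTranspose_mul_gramMatrix (fun v => mul_blockMatrixUnit g a v w)
      fun v => mul_blockMatrixUnit g (star a) v w
  have hunit : IsUnit (gramMatrix f (blockMatrixUnit g i · w)) := by
    refine isUnit_of_forall_exists_mul_eq_mul (fun h => hfw (congrFun₂ h w w)) fun Z => ?_
    have hZ := hcomm (star (g.symm (Pi.single i Z)))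
    rw [star_star, AlgEquiv.apply_symm_apply, Pi.single_eq_same] at hZ
    exact ⟨_, hZ.symm⟩
  obtain ⟨u, hu⟩ :=
    exists_units_eq_conjTranspose_mul_self (hf.posSemidef_gramMatrix _) hunit
  exact ⟨u, fun a => conjTranspose_units_conj (hu ▸ hcomm a)⟩

theorem exists_starAlgEquiv_pi_matrix [StarRing T] [StarModule ℂ T] [FiniteDimensional ℂ T]
    (hT : ∀ x : T, x ≠ 0 → ∃ f : T →ₗ[ℂ] ℂ, IsPositiveFunctional f ∧ f (star x * x) ≠ 0) :
    ∃ (k : ℕ) (m : Fin k → ℕ), Nonempty (T ≃⋆ₐ[ℂ] ∀ i, Matrix (Fin (m i)) (Fin (m i)) ℂ) := by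
  have : IsArtinianRing T := IsArtinianRing.of_finite ℂ T
  have : IsSemisimpleRing T := isSemisimpleRing_of_star_mul_self_eq_zero fun x hx => by
    by_contra hx0
    obtain ⟨f, -, hfx⟩ := hT x hx0
    exact hfx (by rw [hx, map_zero])
  obtain ⟨k, m, -, ⟨g⟩⟩ := IsSemisimpleRing.exists_algEquiv_pi_matrix_of_isAlgClosed ℂ T
  choose u hu using exists_units_conj_eq_conjTranspose hT g
  let conj := AlgEquiv.piCongrRight fun i =>
    MulSemiringAction.toAlgEquiv ℂ (Matrix (Fin (m i)) (Fin (m i)) ℂ) (ConjAct.toConjAct (u i))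
  exact ⟨k, m, ⟨.ofAlgEquiv (g.trans conj) fun a => funext fun i => (hu i a).symm⟩⟩

end Wedderburn

end StarAlgebra

section CStarOrder

attribute [local instance] CStarAlgebra.spectralOrder CStarAlgebra.spectralOrderedRing

section MatPos

variable {A : Type*} [CStarAlgebra A] {n p : ℕ}

theorem matPos_iff_ofMatrix_nonneg {M : Matrix (Fin n) (Fin n) A} :
    MatPos M ↔ 0 ≤ CStarMatrix.ofMatrix M := by
  -- Instance search finds no functional calculus on `CStarMatrix` directly, hence the variable `C`.
  have nonneg_iff {C : Type _} [CStarAlgebra C] (c : C) : 0 ≤ c ↔ ∃ d, c = star d * d :=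
    CStarAlgebra.nonneg_iff_eq_star_mul_self
  exact (nonneg_iff (CStarMatrix.ofMatrix M)).symm

theorem MatPos.isHermitian {M : Matrix (Fin n) (Fin n) A} (hM : MatPos M) : M.IsHermitian := by
  obtain ⟨N, rfl⟩ := hM
  exact isHermitian_conjTranspose_mul_self N

theorem MatPos.apply_self_nonneg {M : Matrix (Fin n) (Fin n) A} (hM : MatPos M) (i : Fin n) :
    0 ≤ M i i := by
  obtain ⟨N, rfl⟩ := hM
  rw [mul_apply]
  exact Finset.sum_nonneg fun k _ => star_mul_self_nonneg (N k i)

theorem matPos_of_tendsto {ι : Type*} {F : Filter ι} [F.NeBot]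
    {M : ι → Matrix (Fin n) (Fin n) A} {L : Matrix (Fin n) (Fin n) A}
    (hM : ∀ l, MatPos (M l)) (hL : ∀ r s, Tendsto (fun l => M l r s) F (𝓝 (L r s))) :
    MatPos L := by
  have hlim : Tendsto M F (𝓝 L) :=
    tendsto_pi_nhds.mpr fun r => tendsto_pi_nhds.mpr fun s => hL r s
  exact matPos_iff_ofMatrix_nonneg.mpr <|
    ge_of_tendsto' ((CStarMatrix.ofMatrixL.continuous.tendsto L).comp hlim)
      fun l => matPos_iff_ofMatrix_nonneg.mp (hM l)

theorem matPos_sum {ι : Type*} {s : Finset ι} {M : ι → Matrix (Fin n) (Fin n) A}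
    (hM : ∀ k ∈ s, MatPos (M k)) : MatPos (∑ k ∈ s, M k) := by
  rw [matPos_iff_ofMatrix_nonneg,
    show CStarMatrix.ofMatrix (∑ k ∈ s, M k) = ∑ k ∈ s, CStarMatrix.ofMatrix (M k) from
      map_sum CStarMatrix.ofMatrixL M s]
  exact Finset.sum_nonneg fun k hk => matPos_iff_ofMatrix_nonneg.mp (hM k hk)

-- One row at a time: the square matrix whose only nonzero row is `v` witnesses `v* v ≥ 0`.
theorem matPos_vecMulVec_star_self (v : Fin n → A) : MatPos (vecMulVec (star v) v) := by
  rcases n with _ | n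
  · exact ⟨0, Subsingleton.elim _ _⟩
  · exact ⟨of fun i j => if i = 0 then v j else 0, by
      ext i j; simp [mul_apply, vecMulVec_apply]⟩

theorem matPos_conjTranspose_mul_self (Z : Matrix (Fin p) (Fin n) A) : MatPos (Zᴴ * Z) := by
  have hrows : Zᴴ * Z = ∑ k, vecMulVec (star (Z k)) (Z k) := by
    ext i j
    simp [mul_apply, Matrix.sum_apply, vecMulVec_apply]
  exact hrows ▸ matPos_sum fun k _ => matPos_vecMulVec_star_self (Z k)

theorem MatPos.conjTranspose_mul_mul_same {M : Matrix (Fin n) (Fin n) A} (hM : MatPos M)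
    (Z : Matrix (Fin n) (Fin p) A) : MatPos (Zᴴ * M * Z) := by
  obtain ⟨N, rfl⟩ := hM
  simpa only [conjTranspose_mul, Matrix.mul_assoc] using matPos_conjTranspose_mul_self (N * Z)

theorem norm_sq_le_of_eq_conjTranspose_mul_self {M N : Matrix (Fin n) (Fin n) A}
    (hM : M = Nᴴ * N) (r s : Fin n) :
    ‖N r s‖ ^ 2 ≤ ‖M s s‖ := by
  rw [sq, ← CStarRing.norm_star_mul_self]
  refine CStarAlgebra.norm_le_norm_of_nonneg_of_le (star_mul_self_nonneg _) ?_
  rw [hM]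
  exact Finset.single_le_sum (f := fun k => star (N k s) * N k s)
    (fun k _ => star_mul_self_nonneg _) (Finset.mem_univ r)

theorem matPos_fin_two_of_norm_le {c : ℝ} (hc : 0 < c) {x : A} (hx : ‖x‖ ≤ c) :
    MatPos !![(c : ℂ) • (1 : A), x; star x, (c : ℂ) • (1 : A)] := by
  have hle : star x * x ≤ algebraMap ℝ A (c ^ 2) :=
    CStarAlgebra.star_mul_le_algebraMap_norm_sq.trans (algebraMap_mono A (by gcongr))
  have hSchur : 0 ≤ c⁻¹ • (algebraMap ℝ A (c ^ 2) - star x * x) :=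
    smul_nonneg (by positivity) (sub_nonneg.mpr hle)
  obtain ⟨w, hw⟩ := CStarAlgebra.nonneg_iff_eq_star_mul_self.mp hSchur
  refine ⟨!![(√c) • (1 : A), (√c)⁻¹ • x; 0, w], ?_⟩
  have hsq : √c * √c = c := Real.mul_self_sqrt hc.le
  have hsqrt : √c ≠ 0 := (Real.sqrt_pos.mpr hc).ne'
  have hcc : c⁻¹ * c ^ 2 = c := by field_simp
  rw [Algebra.algebraMap_eq_smul_one, smul_sub, smul_smul, hcc] at hw
  ext i j
  fin_cases i <;> fin_cases j <;>
    simp [mul_apply, Fin.sum_univ_two, smul_smul, hsq, hsqrt, ← hw, ← mul_inv]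

theorem norm_le_of_matPos_fin_two {c : ℝ} (hc : 0 < c) {x : A}
    (h : MatPos !![(c : ℂ) • (1 : A), x; star x, (c : ℂ) • (1 : A)]) : ‖x‖ ≤ c := by
  have hconj := (h.conjTranspose_mul_mul_same !![x; -((c : ℂ) • 1)]).apply_self_nonneg 0
  have hle : 0 ≤ c • (algebraMap ℝ A (c ^ 2) - star x * x) := by
    convert hconj using 1
    simp [mul_apply, Fin.sum_univ_two, Algebra.algebraMap_eq_smul_one, smul_smul, sq,
      sub_eq_add_neg]
  have hsq : star x * x ≤ algebraMap ℝ A (c ^ 2) :=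
    sub_nonneg.mp (by simpa [smul_smul, hc.ne'] using smul_nonneg (inv_nonneg.mpr hc.le) hle)
  have := (CStarAlgebra.norm_le_iff_le_algebraMap (star x * x) (by positivity)
    (star_mul_self_nonneg x)).mpr hsq
  rw [CStarRing.norm_star_mul_self, ← sq] at this
  exact le_of_sq_le_sq this hc.le

end MatPos

section CompletelyPositive

variable {A B : Type*} [CStarAlgebra A] [CStarAlgebra B]

theorem IsCPsub.matPos_fin_two {S : Submodule ℂ A} {θ : S →ₗ[ℂ] B} (hθ : IsCPsub S θ)
    (hone : (1 : A) ∈ S) {x y : S} (hxy : (y : A) = star (x : A)) {c : ℝ} (hc : 0 < c)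
    (hx : ‖x‖ ≤ c) :
    MatPos !![(c : ℂ) • θ ⟨1, hone⟩, θ x; θ y, (c : ℂ) • θ ⟨1, hone⟩] := by
  have hpos := hθ 2 !![(c : ℂ) • ⟨1, hone⟩, x; y, (c : ℂ) • ⟨1, hone⟩] <| by
    convert matPos_fin_two_of_norm_le hc hx using 1
    ext1 i j
    fin_cases i <;> fin_cases j <;> simp [hxy]
  rw [← map_smul]
  convert hpos using 1
  ext1 i j
  fin_cases i <;> fin_cases j <;> rfl

theorem IsCPsub.map_star {S : Submodule ℂ A} {θ : S →ₗ[ℂ] B} (hθ : IsCPsub S θ)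
    (hone : (1 : A) ∈ S) {x y : S} (hxy : (y : A) = star (x : A)) : θ y = star (θ x) :=
  ((hθ.matPos_fin_two hone hxy (by positivity) (lt_add_one ‖x‖).le).isHermitian.apply 1 0).symm

theorem IsCPsub.norm_map_le {S : Submodule ℂ A} {θ : S →ₗ[ℂ] B} (hθ : IsCPsub S θ)
    {hone : (1 : A) ∈ S} (hθ1 : θ ⟨1, hone⟩ = 1) {x y : S} (hxy : (y : A) = star (x : A)) :
    ‖θ x‖ ≤ ‖x‖ := by
  refine le_of_forall_gt_imp_ge_of_dense fun c hxc => ?_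
  have hc : 0 < c := (norm_nonneg x).trans_lt hxc
  have hpos := hθ.matPos_fin_two hone hxy hc hxc.le
  rw [hθ1, hθ.map_star hone hxy] at hpos
  exact norm_le_of_matPos_fin_two hc hpos

theorem IsCPfun.isCPsub_comp_subtype {θ : A →ₗ[ℂ] B} (hθ : IsCPfun θ) (S : Submodule ℂ A) :
    IsCPsub S (θ ∘ₗ S.subtype) :=
  fun m _ hM => hθ m _ hM

theorem IsCPfun.map_star {θ : A →ₗ[ℂ] B} (hθ : IsCPfun θ) (a : A) : θ (star a) = star (θ a) :=
  (hθ.isCPsub_comp_subtype ⊤).map_star trivial (x := ⟨a, trivial⟩) (y := ⟨star a, trivial⟩) rfl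

theorem IsCPfun.norm_map_le {θ : A →ₗ[ℂ] B} (hθ : IsCPfun θ) (hθ1 : θ 1 = 1) (a : A) :
    ‖θ a‖ ≤ ‖a‖ :=
  (hθ.isCPsub_comp_subtype ⊤).norm_map_le (hone := trivial) hθ1
    (x := ⟨a, trivial⟩) (y := ⟨star a, trivial⟩) rfl

theorem IsCPfun.map_star_mul_self_nonneg {θ : A →ₗ[ℂ] B} (hθ : IsCPfun θ) (a : A) :
    0 ≤ θ (star a * a) := by
  simpa [mul_apply] using (hθ 1 _ (matPos_conjTranspose_mul_self !![a])).apply_self_nonneg 0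

theorem IsCPfun.map_nonneg {θ : A →ₗ[ℂ] B} (hθ : IsCPfun θ) {a : A} (ha : 0 ≤ a) : 0 ≤ θ a := by
  obtain ⟨b, rfl⟩ := CStarAlgebra.nonneg_iff_eq_star_mul_self.mp ha
  exact hθ.map_star_mul_self_nonneg b

-- The positive matrix `(1 a)* (1 a)` stays positive under `θ`; compress it by `(-θ a, 1)`.
theorem IsCPfun.kadison_schwarz {θ : A →ₗ[ℂ] B} (hθ : IsCPfun θ) (hθ1 : θ 1 = 1) (a : A) :
    star (θ a) * θ a ≤ θ (star a * a) := by
  have hpos := hθ 2 _ (matPos_conjTranspose_mul_self (!![1, a] : Matrix (Fin 1) (Fin 2) A))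
  have hcorner := (hpos.conjTranspose_mul_mul_same !![-θ a; 1]).apply_self_nonneg 0
  rw [← sub_nonneg]
  convert hcorner using 1
  simp [mul_apply, Fin.sum_univ_two, hθ1, hθ.map_star, sub_eq_neg_add]

end CompletelyPositive

theorem eq_zero_of_forall_nonneg_smul_add_sq_smul {E : Type*} [AddCommGroup E] [PartialOrder E]
    [IsOrderedAddMonoid E] [Module ℝ E] [PosSMulMono ℝ E] [TopologicalSpace E] [ContinuousAdd E]
    [ContinuousSMul ℝ E] [ClosedIciTopology E] {x y : E}
    (h : ∀ t : ℝ, 0 ≤ t • x + t ^ 2 • y) : x = 0 := by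
  have nonneg_of_forall_pos (z : E) (hz : ∀ t : ℝ, 0 < t → 0 ≤ t • z + t ^ 2 • y) : 0 ≤ z := by
    have hlim : Tendsto (fun t : ℝ => z + t • y) (𝓝[>] 0) (𝓝 z) := by
      have : Continuous fun t : ℝ => z + t • y := by fun_prop
      simpa using (this.tendsto 0).mono_left nhdsWithin_le_nhds
    refine ge_of_tendsto hlim (eventually_mem_nhdsWithin.mono fun t (ht : 0 < t) => ?_)
    have hscale := smul_nonneg (inv_nonneg.mpr ht.le) (hz t ht)
    simpa [smul_smul, sq, ht.ne'] using hscale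
  refine le_antisymm (neg_nonneg.mp (nonneg_of_forall_pos _ fun t _ => ?_))
    (nonneg_of_forall_pos _ fun t _ => h t)
  simpa using h (-t)

section ChoiEffros

variable {B : Type*} [CStarAlgebra B] {P : B →ₗ[ℂ] B}

/-- A unital completely positive idempotent `P` on a C⋆-algebra. Its range is an operator system,
to which Choi and Effros give the structure of a C⋆-algebra. -/
structure IsUCPProjection (P : B →ₗ[ℂ] B) : Prop where
  map_one : P 1 = 1
  isCP : IsCPfun P
  map_map : ∀ b, P (P b) = P b

namespace IsUCPProjection

theorem map_add_star_mul_eq_zero (hP : IsUCPProjection P) {b : B} (hb : P b = 0) (z : B) :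
    P (b * P z + star (b * P z)) = 0 := by
  refine eq_zero_of_forall_nonneg_smul_add_sq_smul (y := P (b * star b)) fun t => ?_
  -- Schwarz at `P z + t b*`, which `P` maps to `P z`, is an inequality with equality at `t = 0`.
  have hfix : P (P z + t • star b) = P z := by
    simp [hP.map_map, hP.isCP.map_star, hb, LinearMap.map_smul_of_tower]
  have hschwarz := hP.isCP.kadison_schwarz hP.map_one (P z + t • star b)
  have hdiff := hP.isCP.map_nonneg (sub_nonneg.mpr hschwarz)
  rw [hfix, map_sub, hP.map_map, ← map_sub] at hdiff
  convert hdiff using 1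
  rw [← LinearMap.map_smul_of_tower, ← LinearMap.map_smul_of_tower, ← map_add]
  congr 1
  simp only [star_add, star_smul, star_star, star_mul, star_trivial, add_mul, mul_add,
    smul_mul_assoc, mul_smul_comm, smul_smul, smul_add, sq]
  abel

theorem map_mul_map_eq_zero (hP : IsUCPProjection P) {b : B} (hb : P b = 0) (z : B) :
    P (b * P z) = 0 := by
  have hre := hP.map_add_star_mul_eq_zero hb z
  have him := hP.map_add_star_mul_eq_zero (b := Complex.I • b) (by simp [hb]) z
  have hsub : b * P z - star (b * P z) =
      -(Complex.I • (Complex.I • b * P z + star (Complex.I • b * P z))) := by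
    simp [smul_add, smul_smul, sub_eq_neg_add]
  have hdouble : (2 : ℂ) • P (b * P z) =
      P (b * P z + star (b * P z)) + P (b * P z - star (b * P z)) := by
    rw [← map_add, add_add_sub_cancel, map_add, two_smul]
  rw [hre, hsub, map_neg, map_smul, him, smul_zero, neg_zero, add_zero] at hdouble
  simpa using hdouble

theorem map_map_mul_map (hP : IsUCPProjection P) (b z : B) : P (P b * P z) = P (b * P z) := by
  have h := hP.map_mul_map_eq_zero (b := P b - b) (by simp [hP.map_map]) z
  rwa [sub_mul, map_sub, sub_eq_zero] at h

theorem map_map_mul_map' (hP : IsUCPProjection P) (b z : B) : P (P z * P b) = P (P z * b) := by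
  have h := congrArg star (hP.map_map_mul_map (star b) (star z))
  simpa only [← hP.isCP.map_star, star_mul, star_star] using h

end IsUCPProjection

/-- The range of the unital completely positive idempotent `P`, as a type synonym carrying the
Choi–Effros product `x ∘ y = P (x y)`. -/
def ChoiEffros (_hP : IsUCPProjection P) : Type _ := LinearMap.range P

namespace ChoiEffros

variable {hP : IsUCPProjection P}

instance : AddCommGroup (ChoiEffros hP) := inferInstanceAs (AddCommGroup (LinearMap.range P))

instance : Module ℂ (ChoiEffros hP) := inferInstanceAs (Module ℂ (LinearMap.range P))

instance : CoeOut (ChoiEffros hP) B := ⟨Subtype.val⟩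

instance : Mul (ChoiEffros hP) := ⟨fun x y => ⟨P (x * y), P.mem_range_self _⟩⟩

instance : One (ChoiEffros hP) := ⟨⟨1, 1, hP.map_one⟩⟩

instance : Star (ChoiEffros hP) :=
  ⟨fun x => ⟨star (x : B), by obtain ⟨b, hb⟩ := x.2; exact ⟨star b, by rw [hP.isCP.map_star, hb]⟩⟩⟩

theorem coe_injective : Function.Injective ((↑) : ChoiEffros hP → B) := Subtype.val_injective

theorem coe_add (x y : ChoiEffros hP) : ((x + y : ChoiEffros hP) : B) = x + y := rfl

theorem coe_smul (c : ℂ) (x : ChoiEffros hP) : ((c • x : ChoiEffros hP) : B) = c • (x : B) := rfl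

theorem coe_zero : ((0 : ChoiEffros hP) : B) = 0 := rfl

theorem coe_mul (x y : ChoiEffros hP) : ((x * y : ChoiEffros hP) : B) = P (x * y) := rfl

theorem coe_one : ((1 : ChoiEffros hP) : B) = 1 := rfl

theorem coe_star (x : ChoiEffros hP) : ((star x : ChoiEffros hP) : B) = star (x : B) := rfl

theorem map_coe (x : ChoiEffros hP) : P x = x := by
  obtain ⟨b, hb⟩ := x.2
  rw [← hb, hP.map_map]

theorem coe_mul_mul (x y z : ChoiEffros hP) :
    ((x * y * z : ChoiEffros hP) : B) = P (x * y * z) := by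
  simpa only [coe_mul, map_coe] using hP.map_map_mul_map (x * y : B) (z : B)

instance : Ring (ChoiEffros hP) where
  __ := (inferInstance : AddCommGroup (ChoiEffros hP))
  mul_assoc x y z := coe_injective <| by
    have h := hP.map_map_mul_map' (y * z : B) (x : B)
    simp only [map_coe] at h
    rw [coe_mul_mul, mul_assoc, ← h, coe_mul, coe_mul]
  one_mul x := coe_injective <| by rw [coe_mul, coe_one, one_mul, map_coe]
  mul_one x := coe_injective <| by rw [coe_mul, coe_one, mul_one, map_coe]
  left_distrib x y z := coe_injective <| by simp only [coe_mul, coe_add, mul_add, map_add]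
  right_distrib x y z := coe_injective <| by simp only [coe_mul, coe_add, add_mul, map_add]
  zero_mul x := coe_injective <| by rw [coe_mul, coe_zero, zero_mul, map_zero]
  mul_zero x := coe_injective <| by rw [coe_mul, coe_zero, mul_zero, map_zero]

instance : StarRing (ChoiEffros hP) where
  star_involutive x := coe_injective <| star_star (x : B)
  star_mul x y := coe_injective <| by
    rw [coe_star, coe_mul, coe_mul, coe_star, coe_star, ← star_mul, hP.isCP.map_star]
  star_add x y := coe_injective <| star_add (x : B) y

instance : Algebra ℂ (ChoiEffros hP) :=
  Algebra.ofModule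
    (fun c x y => coe_injective <| by simp only [coe_mul, coe_smul, smul_mul_assoc, map_smul])
    (fun c x y => coe_injective <| by simp only [coe_mul, coe_smul, mul_smul_comm, map_smul])

instance : StarModule ℂ (ChoiEffros hP) where
  star_smul c x := coe_injective <| star_smul c (x : B)

/-- The inclusion of the Choi–Effros algebra into the ambient C⋆-algebra. It is linear and
`*`-preserving, but multiplicative only up to `P`. -/
def inclusion (hP : IsUCPProjection P) : ChoiEffros hP →ₗ[ℂ] B := (LinearMap.range P).subtype

theorem inclusion_apply (x : ChoiEffros hP) : inclusion hP x = (x : B) := rfl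

theorem star_mul_self_le_coe (x : ChoiEffros hP) :
    star (x : B) * x ≤ ((star x * x : ChoiEffros hP) : B) := by
  simpa only [map_coe, coe_mul, coe_star] using hP.isCP.kadison_schwarz hP.map_one (x : B)

end ChoiEffros

end ChoiEffros

section PositiveFunctional

variable {B : Type*} [CStarAlgebra B]

theorem IsPositiveFunctional.apply_nonneg {f : B →ₗ[ℂ] ℂ} (hf : IsPositiveFunctional f) {b : B}
    (hb : 0 ≤ b) : 0 ≤ f b := by
  obtain ⟨c, rfl⟩ := CStarAlgebra.nonneg_iff_eq_star_mul_self.mp hb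
  exact hf.nonneg c

/-- The hermitian functional `b ↦ F b + conj (F (b*))`, twice the real part of `F`. -/
def hermitianPart (F : B →ₗ[ℂ] ℂ) : B →ₗ[ℂ] ℂ where
  toFun b := F b + star (F (star b))
  map_add' a b := by simp only [star_add, map_add]; abel
  map_smul' c b := by simp [mul_add]

theorem hermitianPart_star (F : B →ₗ[ℂ] ℂ) (b : B) :
    hermitianPart F (star b) = star (hermitianPart F b) := by
  simp [hermitianPart, add_comm]

theorem hermitianPart_of_isSelfAdjoint (F : B →ₗ[ℂ] ℂ) {b : B} (hb : IsSelfAdjoint b) :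
    hermitianPart F b = (2 * (F b).re : ℝ) := by
  simp only [hermitianPart, LinearMap.coe_mk, AddHom.coe_mk, hb.star_eq, RCLike.star_def,
    Complex.add_conj]

theorem exists_isPositiveFunctional_apply_ne_zero {b : B} (hb : 0 ≤ b) (hb0 : b ≠ 0) :
    ∃ f : B →ₗ[ℂ] ℂ, IsPositiveFunctional f ∧ f b ≠ 0 := by
  have hneg : -b ∉ ProperCone.positive ℝ B := fun h =>
    hb0 (le_antisymm (neg_nonneg.mp h) hb)
  obtain ⟨r, hr, hrb⟩ := (ProperCone.positive ℝ B).hyperplane_separation_point hneg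
  let F : B →ₗ[ℂ] ℂ := (r.extendRCLike : StrongDual ℂ B).toLinearMap
  have hre (c : B) : (F c).re = r c := StrongDual.re_extendRCLike_apply (𝕜 := ℂ) r c
  refine ⟨hermitianPart F, ⟨fun x => ?_, hermitianPart_star F⟩, ?_⟩
  · rw [hermitianPart_of_isSelfAdjoint F (.star_mul_self x), hre]
    have := hr _ (star_mul_self_nonneg x)
    exact_mod_cast mul_nonneg zero_le_two this
  · rw [hermitianPart_of_isSelfAdjoint F (.of_nonneg hb), hre]
    rw [map_neg, neg_lt_zero] at hrb
    exact_mod_cast (mul_pos two_pos hrb).ne'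

end PositiveFunctional

namespace ChoiEffros

variable {B : Type*} [CStarAlgebra B] {P : B →ₗ[ℂ] B} {hP : IsUCPProjection P}

theorem exists_isPositiveFunctional {x : ChoiEffros hP} (hx : x ≠ 0) :
    ∃ f : ChoiEffros hP →ₗ[ℂ] ℂ, IsPositiveFunctional f ∧ f (star x * x) ≠ 0 := by
  have hnonneg (y : ChoiEffros hP) : 0 ≤ ((star y * y : ChoiEffros hP) : B) :=
    (star_mul_self_nonneg (y : B)).trans (star_mul_self_le_coe y)
  have hne : ((star x * x : ChoiEffros hP) : B) ≠ 0 := fun h => by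
    have hle := star_mul_self_le_coe x
    rw [h] at hle
    have hzero := le_antisymm hle (star_mul_self_nonneg _)
    exact hx (coe_injective ((CStarRing.star_mul_self_eq_zero_iff _).mp hzero))
  obtain ⟨f, hf, hfx⟩ := exists_isPositiveFunctional_apply_ne_zero (hnonneg x) hne
  exact ⟨f ∘ₗ inclusion hP, ⟨fun y => hf.apply_nonneg (hnonneg y), fun y => hf.map_star y⟩, hfx⟩

end ChoiEffros

-- If `n` is the negative part of `a`, then `κ (n a n) = -κ (n³)` is both `≥ 0` and `≤ 0`.
theorem nonneg_of_forall_map_conj_nonneg {C E : Type*} [CStarAlgebra C] [AddCommGroup E]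
    [PartialOrder E] [IsOrderedAddMonoid E] {κ : C →+ E} (hinj : Function.Injective κ)
    (hκ : ∀ x, 0 ≤ κ (star x * x)) {a : C} (ha : IsSelfAdjoint a)
    (hconj : ∀ x, 0 ≤ κ (star x * a * x)) : 0 ≤ a := by
  rw [← CFC.negPart_eq_zero_iff a ha]
  have hn : 0 ≤ a⁻ := CFC.negPart_nonneg a
  have hsa : star a⁻ = a⁻ := (IsSelfAdjoint.of_nonneg hn).star_eq
  have hcube : star a⁻ * a * a⁻ = -(a⁻ * a⁻ * a⁻) := by
    nth_rewrite 2 [← CFC.posPart_sub_negPart a ha]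
    rw [hsa, mul_sub, CFC.negPart_mul_posPart, zero_sub, neg_mul]
  have hcube_nonneg : 0 ≤ a⁻ * a⁻ * a⁻ := by
    simpa only [hsa] using star_left_conjugate_nonneg hn a⁻
  obtain ⟨c, hc⟩ := CStarAlgebra.nonneg_iff_eq_star_mul_self.mp hcube_nonneg
  have hcube_zero : a⁻ * a⁻ * a⁻ = 0 := by
    refine (map_eq_zero_iff κ hinj).mp (le_antisymm ?_ (hc ▸ hκ c))
    simpa only [hcube, map_neg, neg_nonneg] using hconj a⁻
  have hsq : star (a⁻ * a⁻) * (a⁻ * a⁻) = 0 := by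
    rw [star_mul, hsa, ← mul_assoc, hcube_zero, zero_mul]
  rw [CStarRing.star_mul_self_eq_zero_iff] at hsq
  rwa [← CStarRing.star_mul_self_eq_zero_iff, hsa]

theorem matPos_of_forall_matPos_map_conj {C B : Type*} [CStarAlgebra C] [CStarAlgebra B]
    {κ : C →+ B} (hinj : Function.Injective κ) {n : ℕ}
    (hκ : ∀ N : Matrix (Fin n) (Fin n) C, MatPos ((Nᴴ * N).map κ)) {M : Matrix (Fin n) (Fin n) C}
    (hM : M.IsHermitian) (hconj : ∀ N : Matrix (Fin n) (Fin n) C, MatPos ((Nᴴ * M * N).map κ)) :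
    MatPos M :=
  let κₙ : CStarMatrix (Fin n) (Fin n) C →+ CStarMatrix (Fin n) (Fin n) B := κ.mapMatrix
  matPos_iff_ofMatrix_nonneg.mpr <| nonneg_of_forall_map_conj_nonneg (κ := κₙ)
    (Matrix.map_injective hinj) (fun N => matPos_iff_ofMatrix_nonneg.mp (hκ N)) hM
    fun N => matPos_iff_ofMatrix_nonneg.mp (hconj N)

namespace ChoiEffros

variable {B : Type*} [CStarAlgebra B] {P : B →ₗ[ℂ] B} {hP : IsUCPProjection P}

theorem matPos_map_inclusion_conjTranspose_mul_self {n : ℕ}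
    (N : Matrix (Fin n) (Fin n) (ChoiEffros hP)) : MatPos ((Nᴴ * N).map (inclusion hP)) := by
  convert hP.isCP n _ (matPos_conjTranspose_mul_self (N.map (inclusion hP))) using 1
  ext i j
  simp [mul_apply, inclusion_apply, coe_mul, coe_star]

theorem matPos_map_inclusion_conjTranspose_mul_mul {n : ℕ}
    {M : Matrix (Fin n) (Fin n) (ChoiEffros hP)} (hM : MatPos (M.map (inclusion hP)))
    (N : Matrix (Fin n) (Fin n) (ChoiEffros hP)) : MatPos ((Nᴴ * M * N).map (inclusion hP)) := by
  convert hP.isCP n _ (hM.conjTranspose_mul_mul_same (N.map (inclusion hP))) using 1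
  ext i j
  simp [mul_apply, Finset.sum_mul, inclusion_apply, coe_mul_mul, coe_star]

theorem matPos_map_inclusion_iff {C : Type*} [CStarAlgebra C] (γ : ChoiEffros hP ≃⋆ₐ[ℂ] C) {n : ℕ}
    {M : Matrix (Fin n) (Fin n) (ChoiEffros hP)} :
    MatPos (M.map (inclusion hP)) ↔ MatPos (M.map γ) := by
  have map_mul_symm (X Y : Matrix (Fin n) (Fin n) C) :
      (X * Y).map γ.symm = X.map γ.symm * Y.map γ.symm := Matrix.map_mul (f := γ.symm)
  have map_symm_conjTranspose (X : Matrix (Fin n) (Fin n) C) :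
      Xᴴ.map γ.symm = (X.map γ.symm)ᴴ := conjTranspose_map _ fun _ => map_star _ _
  have map_symm_map : (M.map γ).map γ.symm = M := by ext i j; simp
  have matPos_symm_conjTranspose_mul_self (N : Matrix (Fin n) (Fin n) C) :
      MatPos (((Nᴴ * N).map γ.symm).map (inclusion hP)) := by
    rw [map_mul_symm, map_symm_conjTranspose]
    exact matPos_map_inclusion_conjTranspose_mul_self _
  constructor
  · intro hM
    have hMherm : M.IsHermitian := ext fun i j => coe_injective (hM.isHermitian.apply i j)
    refine matPos_of_forall_matPos_map_conj
      (κ := (inclusion hP).toAddMonoidHom.comp (γ.symm : C →+ ChoiEffros hP))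
      (coe_injective.comp γ.symm.injective) matPos_symm_conjTranspose_mul_self
      (hMherm.map γ (map_star γ)) fun N => ?_
    have hconj := matPos_map_inclusion_conjTranspose_mul_mul hM (N.map γ.symm)
    rwa [← map_symm_conjTranspose, ← map_symm_map, ← map_mul_symm, ← map_mul_symm] at hconj
  · rintro ⟨N, hN⟩
    rw [← map_symm_map, hN]
    exact matPos_symm_conjTranspose_mul_self N

end ChoiEffros

/-- The operator system `S ⊆ A` is unitally completely order isomorphic to a finite direct sum of
full matrix algebras. -/
def IsCompletelyOrderIsoMatrixSum {A : Type*} [Ring A] [StarRing A] [Module ℂ A]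
    (S : Submodule ℂ A) (hone : (1 : A) ∈ S) : Prop :=
  ∃ (k : ℕ) (m : Fin k → ℕ) (γ : S ≃ₗ[ℂ] ∀ i, Matrix (Fin (m i)) (Fin (m i)) ℂ),
    γ ⟨1, hone⟩ = 1 ∧ IsCPsub S γ ∧
    ∀ (n : ℕ) (M : Matrix (Fin n) (Fin n) (∀ i, Matrix (Fin (m i)) (Fin (m i)) ℂ)),
      MatPos M → MatPos ((M.map γ.symm).map fun x => (x : A))

section Factorization

variable {A B : Type*} [CStarAlgebra A] [CStarAlgebra B] {S : Submodule ℂ A} {hone : (1 : A) ∈ S}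
  {Φ : S →ₗ[ℂ] B} {Ψ : B →ₗ[ℂ] S}

theorem isUCPProjection_comp (hΦ1 : Φ ⟨1, hone⟩ = 1) (hΦ : IsCPsub S Φ) (hΨ1 : Ψ 1 = ⟨1, hone⟩)
    (hΨ : IsCPfun fun b => (Ψ b : A)) (hΨΦ : Function.LeftInverse Ψ Φ) :
    IsUCPProjection (Φ ∘ₗ Ψ) where
  map_one := by rw [LinearMap.comp_apply, hΨ1, hΦ1]
  isCP n M hM := hΦ n (M.map Ψ) (hΨ n M hM)
  map_map b := congrArg Φ (hΨΦ (Ψ b))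

/-- An operator system `S` that factors through `B` as `Ψ ∘ Φ = id` is, as a vector space, the
Choi–Effros algebra of `Φ ∘ Ψ`. -/
def equivChoiEffros (hP : IsUCPProjection (Φ ∘ₗ Ψ)) (hΨΦ : Function.LeftInverse Ψ Φ) :
    S ≃ₗ[ℂ] ChoiEffros hP :=
  LinearEquiv.ofLinearMap
    (Φ.codRestrict (LinearMap.range (Φ ∘ₗ Ψ)) fun x => ⟨Φ x, congrArg Φ (hΨΦ x)⟩)
    (Ψ ∘ₗ ChoiEffros.inclusion hP)
    (LinearMap.ext fun y => ChoiEffros.coe_injective (ChoiEffros.map_coe y))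
    (LinearMap.ext hΨΦ)

open scoped Matrix.Norms.L2Operator in
theorem isCompletelyOrderIsoMatrixSum_of_leftInverse [FiniteDimensional ℂ S]
    (hΦ1 : Φ ⟨1, hone⟩ = 1) (hΦ : IsCPsub S Φ) (hΨ1 : Ψ 1 = ⟨1, hone⟩)
    (hΨ : IsCPfun fun b => (Ψ b : A)) (hΨΦ : Function.LeftInverse Ψ Φ) :
    IsCompletelyOrderIsoMatrixSum S hone := by
  have hP := isUCPProjection_comp hΦ1 hΦ hΨ1 hΨ hΨΦ
  let e : S ≃ₗ[ℂ] ChoiEffros hP := equivChoiEffros hP hΨΦ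
  have : FiniteDimensional ℂ (ChoiEffros hP) := e.finiteDimensional
  obtain ⟨k, m, ⟨γ⟩⟩ := exists_starAlgEquiv_pi_matrix (T := ChoiEffros hP)
    fun _ => ChoiEffros.exists_isPositiveFunctional
  refine ⟨k, m, e.trans γ.toAlgEquiv.toLinearEquiv, ?_, fun n M hM => ?_, fun n M hM => ?_⟩
  · have he1 : e ⟨1, hone⟩ = 1 := ChoiEffros.coe_injective hΦ1
    exact (congrArg γ he1).trans (map_one γ)
  · exact (ChoiEffros.matPos_map_inclusion_iff γ (M := M.map e)).mp (hΦ n M hM)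
  · have hγ : (M.map γ.symm).map γ = M := by ext1 i j; simp
    rw [← hγ] at hM
    exact hΨ n _ ((ChoiEffros.matPos_map_inclusion_iff γ).mpr hM)

end Factorization

section Limit

variable {ι : Type*}

theorem exists_linearMap_tendsto_ultrafilter {𝕜 E V : Type*} [NormedField 𝕜] [AddCommGroup E]
    [Module 𝕜 E] [NormedAddCommGroup V] [NormedSpace 𝕜 V] [ProperSpace V] (U : Ultrafilter ι)
    (f : ι → E →ₗ[𝕜] V) (hf : ∀ x, ∃ C, ∀ l, ‖f l x‖ ≤ C) :
    ∃ g : E →ₗ[𝕜] V, ∀ x, Tendsto (fun l => f l x) U (𝓝 (g x)) := by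
  have hlim (x : E) : ∃ v, Tendsto (fun l => f l x) U (𝓝 v) := by
    obtain ⟨C, hC⟩ := hf x
    have hmem : ∀ᶠ l in (U : Filter ι), f l x ∈ Metric.closedBall 0 C :=
      .of_forall fun l => by simpa using hC l
    obtain ⟨v, -, hv⟩ := (isCompact_closedBall (0 : V) C).ultrafilter_le_nhds (U.map fun l => f l x)
      (le_principal_iff.mpr hmem)
    exact ⟨v, hv⟩
  choose g hg using hlim
  exact ⟨linearMapOfTendsto g f (tendsto_pi_nhds.mpr hg), hg⟩

variable {B : ι → Type*} [∀ l, CStarAlgebra (B l)] [∀ l, Nontrivial (B l)]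

instance : CStarAlgebra (lp B ∞) where

theorem conjTranspose_mul_self_map_lp_apply {n : ℕ} (N : Matrix (Fin n) (Fin n) (lp B ∞)) (l : ι) :
    (Nᴴ * N).map (fun b => b l) = (N.map fun b => b l)ᴴ * N.map fun b => b l := by
  ext r s
  exact map_sum (lp.evalₗ (𝕜 := ℂ) B ∞ l) (fun j => star (N j r) * N j s) Finset.univ

theorem matPos_lp_infty_iff {n : ℕ} {M : Matrix (Fin n) (Fin n) (lp B ∞)} :
    MatPos M ↔ ∀ l, MatPos (M.map fun b => b l) := by
  refine ⟨?_, fun h => ?_⟩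
  · rintro ⟨N, rfl⟩ l
    exact ⟨_, conjTranspose_mul_self_map_lp_apply N l⟩
  · choose N hN using h
    have hbdd (r s : Fin n) : Memℓp (fun l => N l r s) ∞ := by
      refine memℓp_infty ⟨√‖M s s‖, ?_⟩
      rintro _ ⟨l, rfl⟩
      exact Real.le_sqrt_of_sq_le <| (norm_sq_le_of_eq_conjTranspose_mul_self (hN l) r s).trans
        (lp.norm_apply_le_norm ENNReal.top_ne_zero (M s s) l)
    let N' : Matrix (Fin n) (Fin n) (lp B ∞) := of fun r s => ⟨_, hbdd r s⟩
    refine ⟨N', Matrix.ext fun r s => lp.ext (funext fun l => ?_)⟩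
    exact congr_fun₂ ((hN l).trans (conjTranspose_mul_self_map_lp_apply N' l).symm) r s

/-- The map `x ↦ (φ l x)_l` into the `ℓ^∞`-product assembled from contractions `φ l`. -/
def lpInftyMk {V : Type*} [SeminormedAddCommGroup V] [Module ℂ V] (φ : ∀ l, V →ₗ[ℂ] B l)
    (hφ : ∀ l x, ‖φ l x‖ ≤ ‖x‖) : V →ₗ[ℂ] lp B ∞ where
  toFun x := ⟨fun l => φ l x, memℓp_infty ⟨‖x‖, by rintro _ ⟨l, rfl⟩; exact hφ l x⟩⟩
  map_add' x y := lp.ext (funext fun l => map_add (φ l) x y)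
  map_smul' c x := lp.ext (funext fun l => map_smul (φ l) c x)

end Limit

section Nuclear

variable {A : Type*} [CStarAlgebra A] {S : Submodule ℂ A} {hone : (1 : A) ∈ S}

theorem isCompletelyOrderIsoMatrixSum_of_subsingleton [Subsingleton A] :
    IsCompletelyOrderIsoMatrixSum S hone :=
  isCompletelyOrderIsoMatrixSum_of_leftInverse (Φ := S.subtype) (Ψ := 0) rfl (fun _ _ hM => hM)
    (Subsingleton.elim _ _) (fun _ _ _ => ⟨0, Subsingleton.elim _ _⟩) fun _ => Subsingleton.elim _ _

variable {ι : Type*} {B : ι → Type*} [∀ l, CStarAlgebra (B l)] [FiniteDimensional ℂ S]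

theorem exists_isCPfun_tendsto_ultrafilter [∀ l, Nontrivial (B l)] (U : Ultrafilter ι)
    {ψ : ∀ l, B l →ₗ[ℂ] S} (hψ1 : ∀ l, ψ l 1 = ⟨1, hone⟩) (hψ : ∀ l, IsCPfun fun b => (ψ l b : A)) :
    ∃ Ψ : lp B ∞ →ₗ[ℂ] S, (∀ b, Tendsto (fun l => ψ l (b l)) U (𝓝 (Ψ b))) ∧
      Ψ 1 = ⟨1, hone⟩ ∧ IsCPfun fun b => (Ψ b : A) := by
  have hnorm (l : ι) (b : B l) : ‖ψ l b‖ ≤ ‖b‖ :=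
    IsCPfun.norm_map_le (θ := S.subtype ∘ₗ ψ l) (hψ l) (congrArg S.subtype (hψ1 l)) b
  have : ProperSpace S := FiniteDimensional.proper ℂ S
  obtain ⟨Ψ, hΨ⟩ := exists_linearMap_tendsto_ultrafilter U
    (fun l => ψ l ∘ₗ lp.evalₗ B ∞ l) fun b =>
      ⟨‖b‖, fun l => (hnorm l _).trans (lp.norm_apply_le_norm ENNReal.top_ne_zero b l)⟩
  refine ⟨Ψ, hΨ, ?_, fun n M hM => ?_⟩
  · exact tendsto_nhds_unique (hΨ 1) (tendsto_const_nhds.congr fun l => (hψ1 l).symm)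
  · exact matPos_of_tendsto (fun l => hψ l n _ (matPos_lp_infty_iff.mp hM l))
      fun r s => (continuous_subtype_val.tendsto _).comp (hΨ (M r s))

theorem stmt_14_general (hstar : ∀ x ∈ S, star x ∈ S) {F : Filter ι} [F.NeBot]
    {φ : ∀ l, S →ₗ[ℂ] B l} {ψ : ∀ l, B l →ₗ[ℂ] S} (hφ1 : ∀ l, φ l ⟨1, hone⟩ = 1)
    (hφ : ∀ l, IsCPsub S (φ l)) (hψ1 : ∀ l, ψ l 1 = ⟨1, hone⟩)
    (hψ : ∀ l, IsCPfun fun b => (ψ l b : A))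
    (happrox : ∀ x, Tendsto (fun l => ψ l (φ l x)) F (𝓝 x)) :
    IsCompletelyOrderIsoMatrixSum S hone := by
  rcases subsingleton_or_nontrivial A with hA | hA
  · exact isCompletelyOrderIsoMatrixSum_of_subsingleton
  have (l : ι) : Nontrivial (B l) := ⟨1, 0, fun h => one_ne_zero (α := A) <| by
    simpa [h] using congrArg Subtype.val (hψ1 l).symm⟩
  have hφnorm (l : ι) (x : S) : ‖φ l x‖ ≤ ‖x‖ :=
    (hφ l).norm_map_le (hφ1 l) (y := ⟨star (x : A), hstar x x.2⟩) rfl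
  obtain ⟨Ψ, hlim, hΨ1, hΨ⟩ := exists_isCPfun_tendsto_ultrafilter (Ultrafilter.of F) hψ1 hψ
  exact isCompletelyOrderIsoMatrixSum_of_leftInverse (Φ := lpInftyMk φ hφnorm) (Ψ := Ψ)
    (lp.ext (funext hφ1)) (fun n M hM => matPos_lp_infty_iff.mpr fun l => hφ l n M hM) hΨ1 hΨ
    fun x => tendsto_nhds_unique (hlim _) ((happrox x).mono_left (Ultrafilter.of_le F))

end Nuclear

end CStarOrder

/-- a finite-dimensional concrete operator system `S ⊆ B(H)` admitting nets
of unital completely positive maps `φ_l : S → M_{d l}(ℂ)`, `ψ_l : M_{d l}(ℂ) → S` with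
`ψ_l ∘ φ_l → id_S` in the point-norm topology is unitally completely order isomorphic to
a finite direct sum of matrix algebras. -/
theorem stmt_14 {H' : Type*} [NormedAddCommGroup H'] [InnerProductSpace ℂ H']
    [CompleteSpace H'] (S : Submodule ℂ (H' →L[ℂ] H'))
    (hone : (1 : H' →L[ℂ] H') ∈ S) (hstar : ∀ X ∈ S, star X ∈ S)
    [FiniteDimensional ℂ ↥S]
    {ι : Type*} [Nonempty ι] [Preorder ι] [IsDirected ι (· ≤ ·)] (d : ι → ℕ)
    (φ : ∀ l : ι, ↥S →ₗ[ℂ] Matrix (Fin (d l)) (Fin (d l)) ℂ)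
    (ψ : ∀ l : ι, Matrix (Fin (d l)) (Fin (d l)) ℂ →ₗ[ℂ] ↥S)
    (hφ1 : ∀ l, φ l ⟨1, hone⟩ = 1) (hφcp : ∀ l, IsCPsub S (φ l))
    (hψ1 : ∀ l, ψ l 1 = ⟨1, hone⟩)
    (hψcp : ∀ l, IsCPfun (fun Y : Matrix (Fin (d l)) (Fin (d l)) ℂ =>
      ((ψ l Y : ↥S) : H' →L[ℂ] H')))
    (happrox : ∀ X : ↥S,
      Filter.Tendsto
        (fun l => ‖(X : H' →L[ℂ] H') - ((ψ l (φ l X) : ↥S) : H' →L[ℂ] H')‖)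
        Filter.atTop (nhds 0)) :
    ∃ (k : ℕ) (m : Fin k → ℕ)
      (γ : ↥S ≃ₗ[ℂ] ((i : Fin k) → Matrix (Fin (m i)) (Fin (m i)) ℂ)),
      γ ⟨1, hone⟩ = 1 ∧ IsCPsub S γ ∧
      ∀ (mm : ℕ) (M : Matrix (Fin mm) (Fin mm) ((i : Fin k) → Matrix (Fin (m i)) (Fin (m i)) ℂ)),
        MatPos M → MatPos ((M.map γ.symm).map (fun x => (x : H' →L[ℂ] H'))) := by
  open scoped Matrix.Norms.L2Operator in
  refine stmt_14_general hstar hφ1 hφcp hψ1 hψcp (F := atTop) fun X => ?_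
  rw [tendsto_iff_norm_sub_tendsto_zero]
  exact (happrox X).congr fun l => norm_sub_rev _ _
end
end
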